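/- There exist constants c₁, c₂ ∈ ℕ such that for every 2-VASS V = (Q,T) there exist a natural number D ≤ (|Q| + ‖T‖)^{c₁} and a finite set X of linear path schemes over V such that, writing O = [D,∞)×[D,∞) ⊆ ℕ²: for all states p,q ∈ Q and all u,v ∈ O, p(u) →*_O q(v) holds if and only if p(u) →^X_{ℕ²} q(v) holds; moreover every ρ ∈ X has length at most (|Q| + ‖T‖)^{c₂} and at most 2·|Q| cycles. -/

import Mathlib

namespace VASS

/-- Integer vectors of dimension `d`. -/
abbrev Vec (d : ℕ) := Fin d → ℤ

/-- A transition of a `d`-VASS: source state, update vector, target state. -/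
abbrev Trans (d : ℕ) := ℕ × Vec d × ℕ

/-- The norm of a vector: maximum of absolute values of its components. -/
def vnorm {d : ℕ} (z : Vec d) : ℕ := Finset.univ.sup fun i => (z i).natAbs

/-- The norm of a transition set. -/
def tnorm {d : ℕ} (T : Finset (Trans d)) : ℕ := T.sup fun t => vnorm t.2.1

/-- The displacement of a word of transitions. -/
def disp {d : ℕ} (π : List (Trans d)) : Vec d := (π.map fun t => t.2.1).sum

/-- `IsPathFrom p q π` : `π` is a path from `p` to `q`. -/
def IsPathFrom {d : ℕ} : ℕ → ℕ → List (Trans d) → Prop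
  | p, q, [] => p = q
  | p, q, t :: rest => t.1 = p ∧ IsPathFrom t.2.2 q rest

/-- ℕ^d as a subset of ℤ^d. -/
def NatSet (d : ℕ) : Set (Vec d) := {v | ∀ i, 0 ≤ v i}

/-- `p(u) →^π_A q(v)`. -/
def Run {d : ℕ} (T : Finset (Trans d)) (A : Set (Vec d)) (p : ℕ) (u : Vec d)
    (q : ℕ) (v : Vec d) (π : List (Trans d)) : Prop :=
  (∀ t ∈ π, t ∈ T) ∧ IsPathFrom p q π ∧ u ∈ A ∧ v = u + disp π ∧
    ∀ i, 1 ≤ i → i ≤ π.length → u + disp (π.take i) ∈ A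

/-- `p(u) →*_A q(v)`. -/
def Reach {d : ℕ} (T : Finset (Trans d)) (A : Set (Vec d)) (p : ℕ) (u : Vec d)
    (q : ℕ) (v : Vec d) : Prop := ∃ π, Run T A p u q v π

/-- A linear path scheme `α₀ β₁* α₁ ⋯ β_k* α_k`, presented as the initial
segment `α₀` together with the list of pairs `(βᵢ, αᵢ)`. -/
abbrev LPS (d : ℕ) := List (Trans d) × List (List (Trans d) × List (Trans d))

/-- The underlying word `α₀ β₁ α₁ ⋯ β_k α_k` of a linear path scheme. -/
def lpsSupport {d : ℕ} (ρ : LPS d) : List (Trans d) :=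
  ρ.1 ++ (ρ.2.map fun s => s.1 ++ s.2).flatten

/-- The length of a linear path scheme. -/
def lpsLen {d : ℕ} (ρ : LPS d) : ℕ := (lpsSupport ρ).length

/-- The number of cycles of a linear path scheme. -/
def numCycles {d : ℕ} (ρ : LPS d) : ℕ := ρ.2.length

/-- `ρ` is a linear path scheme from `p` to `q` over the transition set `T`:
its underlying word uses transitions from `T` and is a path from `p` to `q`,
and each `βᵢ` is a cycle. -/
def IsLPSFrom {d : ℕ} (T : Finset (Trans d)) (p q : ℕ) (ρ : LPS d) : Prop :=
  (∀ t ∈ lpsSupport ρ, t ∈ T) ∧ IsPathFrom p q (lpsSupport ρ) ∧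
    ∀ s ∈ ρ.2, s.1 ≠ [] ∧ ∃ r, IsPathFrom r r s.1

/-- The word `α₀ β₁^{e₁} α₁ ⋯ β_k^{e_k} α_k` of a linear path scheme. -/
def lpsWord {d : ℕ} (ρ : LPS d) (e : List ℕ) : List (Trans d) :=
  ρ.1 ++ (List.zipWith (fun s n => (List.replicate n s.1).flatten ++ s.2) ρ.2 e).flatten

/-- Membership in the language of a linear path scheme. -/
def InLang {d : ℕ} (ρ : LPS d) (π : List (Trans d)) : Prop :=
  ∃ e : List ℕ, e.length = numCycles ρ ∧ π = lpsWord ρ e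

/-- `p(u) →^S_A q(v)` for a finite set `S` of linear path schemes. -/
def SReach {d : ℕ} (T : Finset (Trans d)) (S : Finset (LPS d)) (A : Set (Vec d))
    (p : ℕ) (u : Vec d) (q : ℕ) (v : Vec d) : Prop :=
  ∃ ρ ∈ S, ∃ π, InLang ρ π ∧ Run T A p u q v π

/-- δ(ρ): the set of displacements of words in the language of `ρ`. -/
def DispSet {d : ℕ} (ρ : LPS d) : Set (Vec d) := {z | ∃ π, InLang ρ π ∧ z = disp π}

/-- A quadrant of ℤ². -/
def IsQuadrant (Z : Set (Vec 2)) : Prop :=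
  ∃ ε : Fin 2 → Bool, Z = {v | ∀ i, if ε i then 0 ≤ v i else v i ≤ 0}

/-- A linear path scheme is zigzag-free if the displacements of all its cycles
lie in a single quadrant. -/
def ZigzagFree (ρ : LPS 2) : Prop :=
  ∃ Z, IsQuadrant Z ∧ ∀ s ∈ ρ.2, disp s.1 ∈ Z




/-- Keyed runs. -/
def KRun {Γ : Type} [AddCommGroup Γ] (E : Set (Trans 2)) (ω : Vec 2 →+ Γ) (P : ℕ → Γ → Prop) :
    ℕ → Γ → List (Trans 2) → ℕ → Γ → Prop
  | p, g, [], q, g' => P p g ∧ p = q ∧ g = g'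
  | p, g, t :: π, q, g' => P p g ∧ t ∈ E ∧ t.1 = p ∧ KRun E ω P t.2.2 (g + ω t.2.1) π q g'

@[simp] lemma disp_nil : disp ([] : List (Trans 2)) = 0 := by simp [disp]
@[simp] lemma disp_cons (t : Trans 2) (π : List (Trans 2)) : disp (t :: π) = t.2.1 + disp π := by
  simp [disp]
@[simp] lemma disp_append (π π' : List (Trans 2)) : disp (π ++ π') = disp π + disp π' := by
  simp [disp]
lemma disp_pow (n : ℕ) (β : List (Trans 2)) :
    disp ((List.replicate n β).flatten) = n • disp β := by
  induction n with
  | zero => simp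
  | succ n ih => rw [List.replicate_succ, List.flatten_cons, disp_append, ih, succ_nsmul, add_comm]

section
variable {Γ : Type} [AddCommGroup Γ] {E : Set (Trans 2)} {ω : Vec 2 →+ Γ} {P : ℕ → Γ → Prop}

lemma krun_head {p g π q g'} (h : KRun E ω P p g π q g') : P p g := by
  cases π <;> exact h.1

lemma krun_append {π1 π2 : List (Trans 2)} : ∀ {p g q g'}, KRun E ω P p g (π1 ++ π2) q g' ↔
    ∃ r h, KRun E ω P p g π1 r h ∧ KRun E ω P r h π2 q g' := by
  induction π1 with
  | nil =>
    intro p g q g'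
    constructor
    · intro h; exact ⟨p, g, ⟨krun_head h, rfl, rfl⟩, h⟩
    · rintro ⟨r, h, ⟨_, rfl, rfl⟩, h2⟩; exact h2
  | cons t π ih =>
    intro p g q g'
    simp only [List.cons_append, KRun, ih]
    constructor
    · rintro ⟨a, b, c, r, h, d, e⟩; exact ⟨r, h, ⟨a, b, c, d⟩, e⟩
    · rintro ⟨r, h, ⟨a, b, c, d⟩, e⟩; exact ⟨a, b, c, r, h, d, e⟩

lemma krun_trans {π1 π2 : List (Trans 2)} {p g r h q g'} (h1 : KRun E ω P p g π1 r h)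
    (h2 : KRun E ω P r h π2 q g') : KRun E ω P p g (π1 ++ π2) q g' :=
  krun_append.2 ⟨r, h, h1, h2⟩

lemma krun_end {π : List (Trans 2)} : ∀ {p g q g'}, KRun E ω P p g π q g' →
    g' = g + ω (disp π) := by
  induction π with
  | nil => rintro p g q g' ⟨_, _, rfl⟩; simp
  | cons t π ih =>
    rintro p g q g' ⟨_, _, _, h⟩
    rw [ih h, disp_cons, map_add, add_assoc]

lemma krun_last {π : List (Trans 2)} : ∀ {p g q g'}, KRun E ω P p g π q g' → P q g' := by
  induction π with
  | nil => rintro p g q g' ⟨h, rfl, rfl⟩; exact h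
  | cons t π ih => rintro p g q g' ⟨_, _, _, h⟩; exact ih h

lemma krun_path {π : List (Trans 2)} : ∀ {p g q g'}, KRun E ω P p g π q g' → IsPathFrom p q π := by
  induction π with
  | nil => rintro p g q g' ⟨h, rfl, rfl⟩; rfl
  | cons t π ih => rintro p g q g' ⟨_, _, h1, h⟩; exact ⟨h1, ih h⟩

lemma krun_mem {π : List (Trans 2)} : ∀ {p g q g'}, KRun E ω P p g π q g' → ∀ t ∈ π, t ∈ E := by
  induction π with
  | nil => intro p g q g' _ t ht; simp at ht
  | cons t π ih =>
    rintro p g q g' ⟨_, h0, h1, h⟩ s hs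
    rcases List.mem_cons.1 hs with rfl | hs
    · exact h0
    · exact ih h s hs

/-- change of everything along a hom -/
lemma krun_map {Δ : Type} [AddCommGroup Δ] {E' : Set (Trans 2)} {ω' : Vec 2 →+ Δ}
    {P' : ℕ → Δ → Prop} (φ : Γ → Δ) (hφ : ∀ g z, φ (g + ω z) = φ g + ω' z)
    (hP : ∀ s g, P s g → P' s (φ g)) {π : List (Trans 2)} :
    ∀ {p g q g'}, (∀ t ∈ π, t ∈ E → t ∈ E') → KRun E ω P p g π q g' →
    KRun E' ω' P' p (φ g) π q (φ g') := by
  induction π with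
  | nil => rintro p g q g' _ ⟨h, rfl, rfl⟩; exact ⟨hP _ _ h, rfl, rfl⟩
  | cons t π ih =>
    rintro p g q g' hE ⟨h, h0, h1, h2⟩
    refine ⟨hP _ _ h, hE t (by simp) h0, h1, ?_⟩
    rw [← hφ]
    exact ih (fun s hs => hE s (by simp [hs])) h2

lemma krun_mono {E' : Set (Trans 2)} {P' : ℕ → Γ → Prop} (hE : ∀ t ∈ E, t ∈ E')
    (hP : ∀ s g, P s g → P' s g) {π p g q g'} (h : KRun E ω P p g π q g') :
    KRun E' ω P' p g π q g' :=
  krun_map (fun g => g) (fun _ _ => rfl) hP (fun t _ ht => hE t ht) h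

/-- pumping a closed run -/
lemma krun_pow {p g β} (hp : P p g) (h : KRun E ω P p g β p g) (n : ℕ) :
    KRun E ω P p g (List.replicate n β).flatten p g := by
  induction n with
  | zero => exact ⟨hp, rfl, rfl⟩
  | succ n ih => rw [List.replicate_succ, List.flatten_cons]; exact krun_trans h ih

/-- visited keys -/
lemma krun_vis {π : List (Trans 2)} {p0 : ℕ} {g0 : Γ} {q : ℕ} {g' : Γ} :
    ∀ {π0 : List (Trans 2)} {p g}, KRun E ω P p0 g0 π0 p g → KRun E ω P p g π q g' →
    KRun E ω (fun s h => ∃ π1 π2, π1 ++ π2 = π0 ++ π ∧ KRun E ω P p0 g0 π1 s h ∧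
      KRun E ω P s h π2 q g') p g π q g' := by
  induction π with
  | nil => intro π0 p g h0 h1; exact ⟨⟨π0, [], rfl, h0, h1⟩, h1.2.1, h1.2.2⟩
  | cons t π ih =>
    intro π0 p g h0 h1
    refine ⟨⟨π0, t :: π, rfl, h0, h1⟩, h1.2.1, h1.2.2.1, ?_⟩
    have h2 : KRun E ω P p g [t] t.2.2 (g + ω t.2.1) :=
      ⟨h1.1, h1.2.1, h1.2.2.1, krun_head h1.2.2.2, rfl, rfl⟩
    have := ih (krun_trans h0 h2) h1.2.2.2
    simpa using this

/-- pigeonhole cut -/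
lemma krun_cut (V : Finset (ℕ × Γ)) (hV : ∀ s g, P s g → (s, g) ∈ V) {π p g q g'}
    (h : KRun E ω P p g π q g') (hl : V.card ≤ π.length) :
    ∃ x c y r k, π = x ++ c ++ y ∧ c ≠ [] ∧ c.length ≤ V.card ∧ KRun E ω P p g x r k ∧
      KRun E ω P r k c r k ∧ KRun E ω P r k y q g' := by
  have key : ∀ i : ℕ, ∃ rk : ℕ × Γ, KRun E ω P p g (π.take i) rk.1 rk.2 ∧
      KRun E ω P rk.1 rk.2 (π.drop i) q g' := by
    intro i
    have h' := h
    rw [← List.take_append_drop i π, krun_append] at h'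
    obtain ⟨r, k, h1, h2⟩ := h'
    exact ⟨(r, k), h1, h2⟩
  choose F hF1 hF2 using key
  have hmaps : ∀ i ∈ Finset.range (V.card + 1), F i ∈ V := fun i _ => hV _ _ (krun_last (hF1 i))
  obtain ⟨i, hi, j, hj, hij, hFij⟩ := Finset.exists_ne_map_eq_of_card_lt_of_maps_to
    (by simp : V.card < (Finset.range (V.card + 1)).card) hmaps
  wlog hlt : i < j generalizing i j
  · exact this j hj i hi hij.symm hFij.symm (by omega)
  simp only [Finset.mem_range] at hi hj
  have e1 : π.take j = π.take i ++ (π.drop i).take (j - i) := by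
    rw [← List.take_add]; congr 1; omega
  have h3 := hF1 j
  rw [e1, krun_append] at h3
  obtain ⟨r, k, h4, h5⟩ := h3
  have hr : r = (F i).1 := by
    have := h4
    have h6 := hF1 i
    -- end state determined by path
    have hdet : ∀ (l : List (Trans 2)) {p q q' : ℕ}, IsPathFrom p q l → IsPathFrom p q' l → q = q' := by
      intro l
      induction l with
      | nil => intro p q q' a b; exact a.symm.trans b
      | cons t l ih => intro p q q' a b; exact ih a.2 b.2
    exact hdet _ (krun_path h4) (krun_path h6)
  have hk : k = (F i).2 := by rw [krun_end h4, krun_end (hF1 i)]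
  subst hr hk
  refine ⟨π.take i, (π.drop i).take (j - i), π.drop j, (F i).1, (F i).2, ?_, ?_, ?_, hF1 i, ?_, ?_⟩
  · rw [← e1, List.take_append_drop]
  · intro h0
    have := congrArg List.length h0
    simp at this; omega
  · simp; omega
  · have := h5; rw [← hFij] at this; exact this
  · have := hF2 j; rw [← hFij] at this; exact this

lemma krun_decomp (V : Finset (ℕ × Γ)) (hV : ∀ s g, P s g → (s, g) ∈ V) (m : ℕ) : ∀ {π p g q g'},
    π.length ≤ m → KRun E ω P p g π q g' →
    ∃ (σ : List (Trans 2)) (cs : List (List (Trans 2))), KRun E ω P p g σ q g' ∧ σ.length ≤ V.card ∧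
      (∀ c ∈ cs, c ≠ [] ∧ c.length ≤ V.card ∧ ∃ r k, KRun E ω P r k c r k) ∧
      disp π = disp σ + (cs.map disp).sum := by
  induction m with
  | zero =>
    intro π p g q g' hl h
    exact ⟨π, [], h, by omega, by simp, by simp⟩
  | succ m ih =>
    intro π p g q g' hl h
    by_cases hc : V.card ≤ π.length
    · obtain ⟨x, c, y, r, k, rfl, hc1, hc2, hx, hcc, hy⟩ := krun_cut V hV h hc
      have : 0 < c.length := List.length_pos_iff.2 hc1
      obtain ⟨σ, cs, h1, h2, h3, h4⟩ := ih (π := x ++ y) (by simp at hl ⊢; omega) (krun_trans hx hy)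
      refine ⟨σ, c :: cs, h1, h2, ?_, ?_⟩
      · intro d hd
        rcases List.mem_cons.1 hd with rfl | hd
        · exact ⟨hc1, hc2, r, k, hcc⟩
        · exact h3 d hd
      · simp only [disp_append, List.map_cons, List.sum_cons] at h4 ⊢
        rw [add_left_comm, ← h4]; abel
    · exact ⟨π, [], h, by omega, by simp, by simp⟩

lemma krun_decomp' (V : Finset (ℕ × Γ)) (hV : ∀ s g, P s g → (s, g) ∈ V) {π p g q g'}
    (h : KRun E ω P p g π q g') :
    ∃ (σ : List (Trans 2)) (cs : List (List (Trans 2))), KRun E ω P p g σ q g' ∧ σ.length ≤ V.card ∧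
      (∀ c ∈ cs, c ≠ [] ∧ c.length ≤ V.card ∧ ∃ r k, KRun E ω P r k c r k) ∧
      disp π = disp σ + (cs.map disp).sum :=
  krun_decomp V hV _ le_rfl h

lemma krun_decomp_closed (V : Finset (ℕ × Γ)) (hV : ∀ s g, P s g → (s, g) ∈ V) {π p g}
    (h : KRun E ω P p g π p g) : ∃ cs : List (List (Trans 2)),
      (∀ c ∈ cs, c ≠ [] ∧ c.length ≤ V.card ∧ ∃ r k, KRun E ω P r k c r k) ∧
      disp π = (cs.map disp).sum := by
  obtain ⟨σ, cs, h1, h2, h3, h4⟩ := krun_decomp' V hV h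
  by_cases hs : σ = []
  · subst hs; exact ⟨cs, h3, by simpa using h4⟩
  · refine ⟨σ :: cs, ?_, by simpa using h4⟩
    intro d hd
    rcases List.mem_cons.1 hd with rfl | hd
    · exact ⟨hs, h2, p, g, h1⟩
    · exact h3 d hd

/-- last-split -/
lemma krun_lastsplit (G : ℕ → Γ → Prop) {π : List (Trans 2)} : ∀ {p g q g'},
    KRun E ω P p g π q g' → KRun E ω (fun s x => P s x ∧ ¬ G s x) p g π q g' ∨
    ∃ s w π1, G s w ∧ KRun E ω P p g π1 s w ∧ ((q = s ∧ g' = w) ∨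
      ∃ t π2, t ∈ E ∧ t.1 = s ∧ KRun E ω (fun s x => P s x ∧ ¬ G s x) t.2.2 (w + ω t.2.1) π2 q g' ∧
        disp π = disp π1 + t.2.1 + disp π2) := by
  induction π with
  | nil =>
    rintro p g q g' ⟨h, rfl, rfl⟩
    by_cases hG : G p g
    · exact Or.inr ⟨p, g, [], hG, ⟨h, rfl, rfl⟩, Or.inl ⟨rfl, rfl⟩⟩
    · exact Or.inl ⟨⟨h, hG⟩, rfl, rfl⟩
  | cons t π ih =>
    rintro p g q g' ⟨h, h0, h1, h2⟩
    rcases ih h2 with h3 | ⟨s, w, π1, hG, h4, h5⟩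
    · by_cases hG : G p g
      · exact Or.inr ⟨p, g, [], hG, ⟨h, rfl, rfl⟩, Or.inr ⟨t, π, h0, h1, h3, by simp⟩⟩
      · exact Or.inl ⟨⟨h, hG⟩, h0, h1, h3⟩
    · refine Or.inr ⟨s, w, t :: π1, hG, ⟨h, h0, h1, h4⟩, ?_⟩
      rcases h5 with h5 | ⟨t', π2, a, b, c, d⟩
      · exact Or.inl h5
      · exact Or.inr ⟨t', π2, a, b, c, by simp [d, add_assoc]⟩

/-- first-split -/
lemma krun_firstsplit (G : ℕ → Γ → Prop) {π : List (Trans 2)} : ∀ {p g q g'},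
    KRun E ω P p g π q g' → KRun E ω (fun s x => P s x ∧ ¬ G s x) p g π q g' ∨
    ∃ s w π1 π2, π = π1 ++ π2 ∧ G s w ∧
      KRun E ω (fun s' x => P s' x ∧ (¬ G s' x ∨ (s' = s ∧ x = w))) p g π1 s w ∧
      KRun E ω P s w π2 q g' := by
  induction π with
  | nil =>
    rintro p g q g' ⟨h, rfl, rfl⟩
    by_cases hG : G p g
    · exact Or.inr ⟨p, g, [], [], rfl, hG, ⟨⟨h, Or.inr ⟨rfl, rfl⟩⟩, rfl, rfl⟩, ⟨h, rfl, rfl⟩⟩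
    · exact Or.inl ⟨⟨h, hG⟩, rfl, rfl⟩
  | cons t π ih =>
    rintro p g q g' h'
    obtain ⟨h, h0, h1, h2⟩ := id h'
    by_cases hG : G p g
    · exact Or.inr ⟨p, g, [], t :: π, rfl, hG, ⟨⟨h, Or.inr ⟨rfl, rfl⟩⟩, rfl, rfl⟩, h'⟩
    · rcases ih h2 with h3 | ⟨s, w, π1, π2, rfl, h4, h5, h6⟩
      · exact Or.inl ⟨⟨h, hG⟩, h0, h1, h3⟩
      · exact Or.inr ⟨s, w, t :: π1, π2, rfl, h4, ⟨⟨h, Or.inl hG⟩, h0, h1, h5⟩, h6⟩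

end

/-- actual runs in ℕ² -/
def NR (E : Set (Trans 2)) (p : ℕ) (u : Vec 2) (π : List (Trans 2)) (q : ℕ) (v : Vec 2) : Prop :=
  KRun E (AddMonoidHom.id _) (fun _ w => ∀ i, 0 ≤ w i) p u π q v

/-- compressible runs -/
inductive Cmp (E : Set (Trans 2)) : ℕ → ℕ → ℕ → Vec 2 → ℕ → Vec 2 → Prop
  | nil {p u} (h : ∀ i, 0 ≤ u i) : Cmp E 0 0 p u p u
  | step {k L p u q v t} (h : ∀ i, 0 ≤ u i) (ht : t ∈ E) (h1 : t.1 = p)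
      (h2 : Cmp E k L t.2.2 (u + t.2.1) q v) : Cmp E k (L + 1) p u q v
  | cyc {k L p u q v w β} (n : ℕ) (hβ : β ≠ []) (hp : IsPathFrom p p β) (hE : ∀ t ∈ β, t ∈ E)
      (h1 : NR E p u (List.replicate n β).flatten p w) (h2 : Cmp E k L p w q v) :
      Cmp E (k + 1) (L + β.length) p u q v

lemma Cmp.trans {E : Set (Trans 2)} {k L p u r w} (h : Cmp E k L p u r w) :
    ∀ {k' L' q v}, Cmp E k' L' r w q v → Cmp E (k + k') (L + L') p u q v := by
  induction h with
  | nil h => intro k' L' q v h'; simpa using h'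
  | step h ht h1 h2 ih =>
    intro k' L' q v h'
    have := Cmp.step h ht h1 (ih h')
    convert this using 1; omega
  | cyc n hβ hp hE h1 h2 ih =>
    intro k' L' q v h'
    have := Cmp.cyc n hβ hp hE h1 (ih h')
    convert this using 1 <;> omega

lemma Cmp.mono {E E' : Set (Trans 2)} (hE : ∀ t ∈ E, t ∈ E') {k L p u r w} (h : Cmp E k L p u r w) :
    Cmp E' k L p u r w := by
  induction h with
  | nil h => exact Cmp.nil h
  | step h ht h1 h2 ih => exact Cmp.step h (hE _ ht) h1 ih
  | cyc n hβ hp hE' h1 h2 ih =>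
    exact Cmp.cyc n hβ hp (fun t ht => hE t (hE' t ht)) (krun_mono hE (fun _ _ h => h) h1) ih

lemma Cmp.of_run {E : Set (Trans 2)} {π : List (Trans 2)} : ∀ {p u q v}, NR E p u π q v →
    Cmp E 0 π.length p u q v := by
  induction π with
  | nil => rintro p u q v ⟨h, rfl, rfl⟩; exact Cmp.nil h
  | cons t π ih => rintro p u q v ⟨h, h0, h1, h2⟩; exact Cmp.step h h0 h1 (ih h2)

lemma Cmp.to_lps {T : Finset (Trans 2)} {k L p u q v} (h : Cmp (T : Set (Trans 2)) k L p u q v) :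
    ∃ (ρ : LPS 2) (e : List ℕ), IsLPSFrom T p q ρ ∧ numCycles ρ = k ∧ lpsLen ρ = L ∧
      e.length = numCycles ρ ∧ NR T p u (lpsWord ρ e) q v := by
  induction h with
  | nil h =>
    exact ⟨([], []), [], by simp [IsLPSFrom, lpsSupport, IsPathFrom], rfl, rfl, rfl, h, rfl, rfl⟩
  | @step k L p u q v t h ht h1 h2 ih =>
    obtain ⟨ρ, e, ⟨a1, a2, a3⟩, rfl, rfl, b3, b4⟩ := ih
    refine ⟨(t :: ρ.1, ρ.2), e, ⟨?_, ⟨h1, a2⟩, a3⟩, rfl, ?_, b3, h, ht, h1, b4⟩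
    · intro s hs
      rcases List.mem_cons.1 (show s ∈ t :: lpsSupport ρ from hs) with rfl | hs
      · exact ht
      · exact a1 s hs
    · simp [lpsLen, lpsSupport]
  | @cyc k L p u q v w β n hβ hp hE h1 h2 ih =>
    obtain ⟨ρ, e, ⟨a1, a2, a3⟩, rfl, rfl, b3, b4⟩ := ih
    have hs : lpsSupport ([], (β, ρ.1) :: ρ.2) = β ++ lpsSupport ρ := by simp [lpsSupport]
    have hw : lpsWord ([], (β, ρ.1) :: ρ.2) (n :: e) =
        (List.replicate n β).flatten ++ lpsWord ρ e := by simp [lpsWord]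
    have happ : ∀ (l l' : List (Trans 2)) {p q r : ℕ}, IsPathFrom p q l → IsPathFrom q r l' →
        IsPathFrom p r (l ++ l') := by
      intro l l'
      induction l with
      | nil => intro p q r a b; cases a; exact b
      | cons t l ih => intro p q r a b; exact ⟨a.1, ih a.2 b⟩
    refine ⟨([], (β, ρ.1) :: ρ.2), n :: e, ⟨?_, ?_, ?_⟩, ?_, ?_, ?_, ?_⟩
    · rw [hs]; intro t ht
      rcases List.mem_append.1 ht with ht | ht
      · exact hE t ht
      · exact a1 t ht
    · rw [hs]; exact happ _ _ hp a2
    · intro s hs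
      rcases List.mem_cons.1 hs with rfl | hs
      · exact ⟨hβ, p, hp⟩
      · exact a3 s hs
    · simp [numCycles]
    · simp only [lpsLen]; rw [hs]; simp; omega
    · simp [numCycles] at b3 ⊢; exact b3
    · rw [hw]; exact krun_trans h1 b4

lemma run_iff {T : Finset (Trans 2)} {π : List (Trans 2)} : ∀ {p u q v},
    Run T (NatSet 2) p u q v π ↔ NR T p u π q v := by
  induction π with
  | nil =>
    intro p u q v
    constructor
    · rintro ⟨_, h1, h2, h3, _⟩
      refine ⟨h2, h1, ?_⟩; simp [h3]
    · rintro ⟨h1, h2, h3⟩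
      refine ⟨by simp, h2, h1, by simp [h3], ?_⟩
      intro i h1 h2; simp at h2; omega
  | cons t π ih =>
    intro p u q v
    unfold NR; simp only [KRun]
    rw [show KRun (T : Set (Trans 2)) (AddMonoidHom.id _) (fun _ w => ∀ i, 0 ≤ w i) t.2.2
      (u + (AddMonoidHom.id (Vec 2)) t.2.1) π q v ↔ _ from (ih (p := t.2.2) (u := u + t.2.1)).symm]
    constructor
    · rintro ⟨h1, h2, h3, h4, h5⟩
      refine ⟨h3, h1 t (by simp), h2.1, fun s hs => h1 s (by simp [hs]), h2.2, ?_, ?_, ?_⟩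
      · simpa using h5 1 le_rfl (by simp)
      · rw [h4]; simp [add_assoc]
      · intro i hi1 hi2
        have := h5 (i + 1) (by omega) (by simp; omega)
        simpa [add_assoc] using this
    · rintro ⟨h3, ht, h2, a1, a2, a3, a4, a5⟩
      refine ⟨?_, ⟨h2, a2⟩, h3, ?_, ?_⟩
      · intro s hs
        rcases List.mem_cons.1 hs with rfl | hs
        · exact ht
        · exact a1 s hs
      · rw [a4]; simp [add_assoc]
      · intro i hi1 hi2
        obtain ⟨j, rfl⟩ : ∃ j, i = j + 1 := ⟨i - 1, by omega⟩
        by_cases hj : j = 0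
        · subst hj; simpa using a3
        · have := a5 j (by omega) (by simpa using hi2)
          simpa [add_assoc] using this



/-- compressible with bounds -/
def CL (E : Set (Trans 2)) (k L p : ℕ) (u : Vec 2) (q : ℕ) (v : Vec 2) : Prop :=
  ∃ k' ≤ k, ∃ L' ≤ L, Cmp E k' L' p u q v

lemma CL.trans {E : Set (Trans 2)} {k L p u r w k' L' q v} (h : CL E k L p u r w)
    (h' : CL E k' L' r w q v) : CL E (k + k') (L + L') p u q v := by
  obtain ⟨a, ha, c, hc, h⟩ := h
  obtain ⟨a', ha', c', hc', h'⟩ := h'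
  exact ⟨a + a', by omega, c + c', by omega, h.trans h'⟩

lemma CL.le {E : Set (Trans 2)} {k L p u r w k' L'} (h : CL E k L p u r w)
    (hk : k ≤ k') (hL : L ≤ L') : CL E k' L' p u r w := by
  obtain ⟨a, ha, c, hc, h⟩ := h
  exact ⟨a, by omega, c, by omega, h⟩

lemma CL.mono {E E' : Set (Trans 2)} (hE : ∀ t ∈ E, t ∈ E') {k L p u r w} (h : CL E k L p u r w) :
    CL E' k L p u r w := by
  obtain ⟨a, ha, c, hc, h⟩ := h
  exact ⟨a, by omega, c, by omega, h.mono hE⟩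

lemma CL.of_run {E : Set (Trans 2)} {π : List (Trans 2)} {p u q v L} (h : NR E p u π q v)
    (hL : π.length ≤ L) : CL E 0 L p u q v := ⟨0, le_rfl, _, hL, Cmp.of_run h⟩

lemma CL.cyc {E : Set (Trans 2)} {β : List (Trans 2)} {p u v L} (n : ℕ) (hβ : β ≠ [])
    (hp : IsPathFrom p p β) (hE : ∀ t ∈ β, t ∈ E)
    (h : NR E p u (List.replicate n β).flatten p v) (hL : β.length ≤ L) : CL E 1 L p u p v := by
  refine ⟨1, le_rfl, 0 + β.length, by omega, Cmp.cyc n hβ hp hE h (Cmp.nil ?_)⟩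
  exact krun_last h

lemma nsm (n : ℕ) (z : Vec 2) (i : Fin 2) : (n • z) i = (n : ℤ) * z i := by
  simp [Pi.smul_apply]

lemma zsm (n : ℤ) (z : Vec 2) (i : Fin 2) : (n • z) i = n * z i := by
  simp [Pi.smul_apply]

/-- transitions bounded by b -/
def Bd (E : Set (Trans 2)) (b : ℕ) : Prop := ∀ t ∈ E, ∀ i, |t.2.1 i| ≤ (b : ℤ)

lemma disp_bd {E : Set (Trans 2)} {b : ℕ} (hb : Bd E b) {π : List (Trans 2)}
    (h : ∀ t ∈ π, t ∈ E) (i : Fin 2) : |disp π i| ≤ (π.length * b : ℤ) := by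
  induction π with
  | nil => simp
  | cons t π ih =>
    have h1 := ih (fun s hs => h s (by simp [hs]))
    have h2 := hb t (h t (by simp)) i
    have h3 := abs_add_le (t.2.1 i) (disp π i)
    simp only [disp_cons, Pi.add_apply, List.length_cons]
    push_cast
    linarith

lemma disp_bd' {E : Set (Trans 2)} {b L : ℕ} (hb : Bd E b) {π : List (Trans 2)}
    (h : ∀ t ∈ π, t ∈ E) (hL : π.length ≤ L) (i : Fin 2) : |disp π i| ≤ ((L * b : ℕ) : ℤ) := by
  have h1 := disp_bd hb h i
  have : (π.length * b : ℕ) ≤ L * b := Nat.mul_le_mul_right _ hL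
  have h2 : ((π.length * b : ℕ) : ℤ) ≤ ((L * b : ℕ) : ℤ) := by exact_mod_cast this
  push_cast at h2 ⊢
  linarith

section
variable {Γ : Type} [AddCommGroup Γ] {E : Set (Trans 2)} {f : Vec 2 →+ Γ} {P : ℕ → Γ → Prop}
  {A : Fin 2 → Prop} {b : ℕ}

lemma nr_plain (hb : Bd E b) (hsafe : ∀ s w, P s (f w) → ∀ i, ¬ A i → 0 ≤ w i)
    {a : List (Trans 2)} : ∀ {p w q g'}, KRun E f P p (f w) a q g' →
    (∀ i, A i → (a.length * b : ℤ) ≤ w i) → NR E p w a q (w + disp a) := by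
  have pos : ∀ {p w}, P p (f w) → ∀ m : ℕ, (∀ i, A i → (m * b : ℤ) ≤ w i) → ∀ i, 0 ≤ w i := by
    intro p w hP m h i
    by_cases hA : A i
    · exact le_trans (by positivity) (h i hA)
    · exact hsafe p w hP i hA
  induction a with
  | nil =>
    rintro p w q g' ⟨h, rfl, _⟩ hw
    exact ⟨pos h _ hw, rfl, by simp⟩
  | cons t a ih =>
    rintro p w q g' ⟨h, h0, h1, h2⟩ hw
    refine ⟨pos h _ hw, h0, h1, ?_⟩
    rw [← map_add] at h2
    have := ih h2 (fun i hA => by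
      have h3 := hw i hA
      have h4 := abs_le.1 (hb t h0 i)
      simp only [List.length_cons, Pi.add_apply] at h3 ⊢
      push_cast at h3
      linarith)
    rw [disp_cons, ← add_assoc]
    exact this

lemma nr_pow (hb : Bd E b) (hsafe : ∀ s w, P s (f w) → ∀ i, ¬ A i → 0 ≤ w i)
    {β : List (Trans 2)} {r : ℕ} {g : Γ} (hβ : KRun E f P r g β r g) (e : ℕ) :
    ∀ {w : Vec 2}, f w = g →
    (∀ i, A i → (β.length * b : ℤ) ≤ w i ∧ (β.length * b : ℤ) ≤ (w + e • disp β) i) →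
    NR E r w (List.replicate e β).flatten r (w + e • disp β) := by
  have hz : f (disp β) = 0 := by
    have := krun_end hβ
    simpa using this
  induction e with
  | zero =>
    intro w hw h
    have h0 : NR E r w [] r (w + disp []) := nr_plain (A := A) hb hsafe (g' := g)
        (by rw [hw]; exact ⟨krun_head hβ, rfl, rfl⟩) (fun i hA => by
          have := (h i hA).1
          refine le_trans ?_ this
          simp; positivity)
    simpa using h0
  | succ e ih =>
    intro w hw h
    rw [List.replicate_succ, List.flatten_cons]
    have h1 : NR E r w β r (w + disp β) :=
      nr_plain (A := A) hb hsafe (by rw [hw]; exact hβ) (fun i hA => (h i hA).1)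
    have h2 := ih (w := w + disp β) (by rw [map_add, hz, hw, add_zero]) (fun i hA => by
      obtain ⟨h3, h4⟩ := h i hA
      have e1 : (w + disp β + e • disp β) i = (w + (e + 1) • disp β) i := by
        simp; ring
      rw [e1]
      refine ⟨?_, h4⟩
      simp only [Pi.add_apply, nsm] at h4 ⊢
      push_cast at h4
      rcases le_total 0 (disp β i) with h5 | h5
      · linarith
      · nlinarith [mul_nonneg (Int.natCast_nonneg e) (neg_nonneg.2 h5)])
    have e1 : w + (e + 1) • disp β = w + disp β + e • disp β := by
      rw [succ_nsmul]; abel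
    rw [e1]
    exact krun_trans h1 h2

lemma assemble (hb : Bd E b) (hsafe : ∀ s w, P s (f w) → ∀ i, ¬ A i → 0 ≤ w i)
    {L : ℕ} {Y D : ℤ} {p r1 r2 q : ℕ} {a β1 c β2 d : List (Trans 2)} {g1 g2 g' : Γ} {w1 w2 : Vec 2}
    (ha : KRun E f P p (f w1) a r1 g1) (hβ1 : KRun E f P r1 g1 β1 r1 g1)
    (hc : KRun E f P r1 g1 c r2 g2) (hβ2 : KRun E f P r2 g2 β2 r2 g2)
    (hd : KRun E f P r2 g2 d q g') (n1 : β1 ≠ []) (n2 : β2 ≠ [])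
    (la : a.length ≤ L) (l1 : β1.length ≤ L) (lc : c.length ≤ L) (l2 : β2.length ≤ L)
    (ld : d.length ≤ L) (e1 e2 : ℕ)
    (hw : w2 = w1 + disp a + e1 • disp β1 + disp c + e2 • disp β2 + disp d)
    (hY : 0 ≤ Y) (hD : 6 * (L * b : ℤ) + 2 * Y ≤ D)
    (hw1 : ∀ i, A i → D ≤ w1 i) (hw2 : ∀ i, A i → D ≤ w2 i)
    (hs : ∀ i, A i → (-Y ≤ e1 * disp β1 i ∧ -Y ≤ e2 * disp β2 i) ∨
      (e1 * disp β1 i ≤ Y ∧ e2 * disp β2 i ≤ Y)) : CL E 2 (5 * L) p w1 q w2 := by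
  have B : ∀ {x : List (Trans 2)}, x.length ≤ L → (x.length * b : ℤ) ≤ (L * b : ℤ) := by
    intro x hx
    exact_mod_cast Nat.mul_le_mul_right b hx
  have z1 : f (disp β1) = 0 := by simpa using krun_end hβ1
  have z2 : f (disp β2) = 0 := by simpa using krun_end hβ2
  have ba := fun i => abs_le.1 (disp_bd hb (krun_mem ha) i)
  have bc := fun i => abs_le.1 (disp_bd hb (krun_mem hc) i)
  have bd := fun i => abs_le.1 (disp_bd hb (krun_mem hd) i)
  have Ba := B la
  have Bc := B lc
  have Bdd := B ld
  have B1 := B l1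
  have B2 := B l2
  have hLb : 0 ≤ (L * b : ℤ) := by positivity
  have key : ∀ i, A i → (L * b : ℤ) ≤ w1 i ∧ (L * b : ℤ) ≤ (w1 + disp a) i ∧
      (L * b : ℤ) ≤ (w1 + disp a + e1 • disp β1) i ∧
      (L * b : ℤ) ≤ (w1 + disp a + e1 • disp β1 + disp c) i ∧
      (L * b : ℤ) ≤ (w1 + disp a + e1 • disp β1 + disp c + e2 • disp β2) i := by
    intro i hA
    have h1 := hw1 i hA
    have h2 := hw2 i hA
    have h3 := hs i hA
    obtain ⟨ba1, ba2⟩ := ba i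
    obtain ⟨bc1, bc2⟩ := bc i
    obtain ⟨bd1, bd2⟩ := bd i
    rw [hw] at h2
    simp only [Pi.add_apply, nsm] at h2 ⊢
    push_cast at h2 ⊢
    rcases h3 with ⟨h3, h4⟩ | ⟨h3, h4⟩
    · refine ⟨by linarith, by linarith, by linarith, by linarith, by linarith⟩
    · refine ⟨by linarith, by linarith, by linarith, by linarith, by linarith⟩
  have r1 := nr_plain (A := A) hb hsafe ha (fun i hA => Ba.trans (key i hA).1)
  have g1e : f (w1 + disp a) = g1 := by rw [map_add, ← krun_end ha]
  have r2 := nr_pow (A := A) hb hsafe hβ1 e1 g1e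
    (fun i hA => ⟨B1.trans (key i hA).2.1, B1.trans (key i hA).2.2.1⟩)
  have g2e : f (w1 + disp a + e1 • disp β1) = g1 := by
    rw [map_add, map_nsmul, z1, smul_zero, add_zero, g1e]
  have r3 := nr_plain (A := A) hb hsafe (g2e ▸ hc) (fun i hA => Bc.trans (key i hA).2.2.1)
  have g3e : f (w1 + disp a + e1 • disp β1 + disp c) = g2 := by
    rw [map_add, g2e, ← krun_end hc]
  have r4 := nr_pow (A := A) hb hsafe hβ2 e2 g3e
    (fun i hA => ⟨B2.trans (key i hA).2.2.2.1, B2.trans (key i hA).2.2.2.2⟩)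
  have g4e : f (w1 + disp a + e1 • disp β1 + disp c + e2 • disp β2) = g2 := by
    rw [map_add, map_nsmul, z2, smul_zero, add_zero, g3e]
  have r5 := nr_plain (A := A) hb hsafe (g4e ▸ hd) (fun i hA => Bdd.trans (key i hA).2.2.2.2)
  rw [← hw] at r5
  have t := (((CL.of_run r1 la).trans (CL.cyc e1 n1 (krun_path hβ1) (krun_mem hβ1) r2 l1)).trans
    (CL.of_run r3 lc)).trans ((CL.cyc e2 n2 (krun_path hβ2) (krun_mem hβ2) r4 l2).trans
    (CL.of_run r5 ld))
  exact t.le (by omega) (by omega)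

end


lemma path_det : ∀ (l : List (Trans 2)) {p q q' : ℕ}, IsPathFrom p q l → IsPathFrom p q' l →
    q = q' := by
  intro l
  induction l with
  | nil => intro p q q' a b; exact a.symm.trans b
  | cons t l ih => intro p q q' a b; exact ih a.2 b.2

section
variable {Γ : Type} [AddCommGroup Γ] {E : Set (Trans 2)} {ω : Vec 2 →+ Γ} {P : ℕ → Γ → Prop}

lemma krun_split_at {P' : ℕ → Γ → Prop} {π1 π2 : List (Trans 2)} {p g q g' r k}
    (h : KRun E ω P p g (π1 ++ π2) q g') (h1 : KRun E ω P' p g π1 r k) :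
    KRun E ω P p g π1 r k ∧ KRun E ω P r k π2 q g' := by
  obtain ⟨r', k', a, b⟩ := krun_append.1 h
  have e1 : r' = r := path_det _ (krun_path a) (krun_path h1)
  have e2 : k' = k := by rw [krun_end a, krun_end h1]
  subst e1 e2
  exact ⟨a, b⟩

lemma krun_vis' {π : List (Trans 2)} {p g q g'} (h : KRun E ω P p g π q g') :
    ∃ P' : ℕ → Γ → Prop, (∀ s k, P' s k → P s k) ∧ KRun E ω P' p g π q g' ∧
      ∀ s k, P' s k → ∃ π1 π2, π1 ++ π2 = π ∧ KRun E ω P' p g π1 s k ∧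
        KRun E ω P' s k π2 q g' := by
  have h0 : KRun E ω P p g [] p g := ⟨krun_head h, rfl, rfl⟩
  have hv := krun_vis h0 h
  refine ⟨_, ?_, hv, ?_⟩
  · rintro s k ⟨π1, π2, _, h1, h2⟩; exact krun_head h2
  · rintro s k ⟨π1, π2, e, h1, h2⟩
    simp only [List.nil_append] at e
    refine ⟨π1, π2, e, ?_⟩
    have hv' := hv
    rw [← e] at hv'
    have := krun_split_at hv' h1
    rw [e] at this
    exact this

lemma krun_lift {Δ : Type} [AddCommGroup Δ] (ω2 : Vec 2 →+ Δ) {π : List (Trans 2)} :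
    ∀ {p g q g'} (y : Δ), KRun E ω P p g π q g' →
    KRun E (ω.prod ω2) (fun s x => P s x.1) p (g, y) π q (g', y + ω2 (disp π)) := by
  induction π with
  | nil => rintro p g q g' y ⟨h, rfl, rfl⟩; exact ⟨h, rfl, by simp⟩
  | cons t π ih =>
    rintro p g q g' y ⟨h, h0, h1, h2⟩
    refine ⟨h, h0, h1, ?_⟩
    have := ih (y + ω2 t.2.1) h2
    simpa [add_assoc] using this

lemma krun_unlift {Δ : Type} [AddCommGroup Δ] (ω2 : Vec 2 →+ Δ) {π : List (Trans 2)}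
    {p : ℕ} {x : Γ × Δ} {q : ℕ} {x' : Γ × Δ}
    (h : KRun E (ω.prod ω2) (fun s x => P s x.1) p x π q x') : KRun E ω P p x.1 π q x'.1 :=
  krun_map Prod.fst (fun g z => by simp) (fun s g h => h) (fun t _ h => h) h

lemma map_list_sum_disp (h : Vec 2 →+ ℤ) (cs : List (List (Trans 2))) :
    h ((cs.map disp).sum) = (cs.map fun c => h (disp c)).sum := by
  rw [map_list_sum, List.map_map]; rfl

lemma shorten [DecidableEq Γ] (V : Finset (ℕ × Γ)) (hV : ∀ s g, P s g → (s, g) ∈ V)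
    (h : Vec 2 →+ ℤ)
    (k : ℕ) (hk : 0 < k) {x : List (Trans 2)} {p g q g'} (hx : KRun E ω P p g x q g') :
    ∃ σ : List (Trans 2), KRun E ω P p g σ q g' ∧ σ.length ≤ V.card * k ∧
      (k : ℤ) ∣ h (disp x) - h (disp σ) ∧
      ((∀ r y c, c ≠ [] → c.length ≤ V.card → KRun E ω P r y c r y → 0 ≤ h (disp c)) →
        h (disp σ) ≤ h (disp x)) := by
  have : NeZero k := ⟨hk.ne'⟩
  set hm : Vec 2 →+ ZMod k := (Int.castAddHom (ZMod k)).comp h with hhm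
  have h1 := krun_lift hm 0 hx
  let V' : Finset (ℕ × (Γ × ZMod k)) :=
    (V ×ˢ (Finset.univ : Finset (ZMod k))).image fun a => (a.1.1, (a.1.2, a.2))
  have hV' : ∀ s (y : Γ × ZMod k), P s y.1 → (s, y) ∈ V' := by
    intro s y hy
    refine Finset.mem_image.2 ⟨((s, y.1), y.2), ?_, rfl⟩
    exact Finset.mem_product.2 ⟨hV _ _ hy, Finset.mem_univ _⟩
  have hc : V'.card ≤ V.card * k := by
    refine Finset.card_image_le.trans ?_
    rw [Finset.card_product, Finset.card_univ, ZMod.card]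
  obtain ⟨σ, cs, s1, s2, s3, s4⟩ := krun_decomp' V' hV' h1
  refine ⟨σ, krun_unlift hm s1, s2.trans hc, ?_, ?_⟩
  · have := congrArg Prod.snd (krun_end s1)
    simp only [Prod.snd_add, AddMonoidHom.prod_apply, zero_add] at this
    rw [← ZMod.intCast_zmod_eq_zero_iff_dvd] 
    push_cast
    simp only [hhm, AddMonoidHom.comp_apply, Int.coe_castAddHom] at this
    rw [this, sub_self]
  · intro hpos
    rw [s4, map_add, map_list_sum_disp]
    have : 0 ≤ (cs.map fun c => h (disp c)).sum := by
      apply List.sum_nonneg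
      intro y hy
      obtain ⟨c, hc, rfl⟩ := List.mem_map.1 hy
      obtain ⟨_, _, r, y, hcc⟩ := s3 c hc
      obtain ⟨ds, d1, d2⟩ := krun_decomp_closed V hV (krun_unlift hm hcc)
      rw [d2, map_list_sum_disp]
      apply List.sum_nonneg
      intro z hz
      obtain ⟨d, hd, rfl⟩ := List.mem_map.1 hz
      obtain ⟨e1, e2, r', y', e3⟩ := d1 d hd
      exact hpos r' y' d e1 e2 e3
    linarith
end

section
variable {E : Set (Trans 2)} {f : Vec 2 →+ ℤ} {P : ℕ → ℤ → Prop} {A : Fin 2 → Prop} {b : ℕ}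

lemma mid_asm (hb : Bd E b) (hsafe : ∀ s w, P s (f w) → ∀ i, ¬ A i → 0 ≤ w i)
    {h : Vec 2 →+ ℤ} (hinj : ∀ z, f z = 0 → h z = 0 → z = 0)
    {L J N : ℕ} {D : ℤ} {p r1 r2 q : ℕ} {a β1 c β2 d π : List (Trans 2)} {g1 g2 : ℤ} {w1 w2 : Vec 2}
    (hπ : KRun E f P p (f w1) π q (f w2)) (hww : w2 = w1 + disp π)
    (ha : KRun E f P p (f w1) a r1 g1) (hβ1 : KRun E f P r1 g1 β1 r1 g1)
    (hc : KRun E f P r1 g1 c r2 g2) (hβ2 : KRun E f P r2 g2 β2 r2 g2)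
    (hd : KRun E f P r2 g2 d q (f w2)) (n1 : β1 ≠ []) (n2 : β2 ≠ [])
    (la : a.length ≤ L) (l1 : β1.length ≤ N) (lc : c.length ≤ L) (l2 : β2.length ≤ N)
    (ld : d.length ≤ L) (hNL : N ≤ L) (e1 e2 : ℕ)
    (hh : h (disp π) = h (disp a) + e1 * h (disp β1) + h (disp c) + e2 * h (disp β2) + h (disp d))
    (hJ : e1 ≤ J ∨ e2 ≤ J)
    (hD : 6 * (L * b : ℤ) + 2 * (J * (N * b)) ≤ D)
    (hw1 : ∀ i, A i → D ≤ w1 i) (hw2 : ∀ i, A i → D ≤ w2 i) : CL E 2 (5 * L) p w1 q w2 := by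
  have z1 : f (disp β1) = 0 := by simpa using krun_end hβ1
  have z2 : f (disp β2) = 0 := by simpa using krun_end hβ2
  have bb : ∀ (e : ℕ) (β : List (Trans 2)), e ≤ J → (∀ t ∈ β, t ∈ E) → β.length ≤ N → ∀ i,
      |(e : ℤ) * disp β i| ≤ (J * (N * b) : ℤ) := by
    intro e β he hβ hl i
    have h1 := disp_bd' hb hβ hl i
    rw [abs_mul, abs_of_nonneg (Int.natCast_nonneg e)]
    push_cast at h1
    have he' : (e : ℤ) ≤ J := by exact_mod_cast he
    exact mul_le_mul he' h1 (abs_nonneg _) (by positivity)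
  refine assemble (A := A) (Y := J * (N * b)) hb hsafe ha hβ1 hc hβ2 hd n1 n2 la (l1.trans hNL) lc (l2.trans hNL) ld
    e1 e2 ?_ (by positivity) hD hw1 hw2 ?_
  · rw [hww]
    have := hinj (disp π - (disp a + e1 • disp β1 + disp c + e2 • disp β2 + disp d)) ?_ ?_
    · rw [sub_eq_zero.1 this]; abel
    · have q1 := krun_end hπ
      have q2 := krun_end ha
      have q3 := krun_end hc
      have q4 := krun_end hd
      simp only [map_sub, map_add, map_nsmul, z1, z2, smul_zero, add_zero]
      linarith
    · simp only [map_sub, map_add, map_nsmul]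
      simp only [nsmul_eq_mul]
      linarith
  · intro i _
    rcases hJ with hJ | hJ
    · have := abs_le.1 (bb e1 β1 hJ (krun_mem hβ1) l1 i)
      have hp : (0 : ℤ) ≤ J * (N * b) := by positivity
      rcases le_total 0 ((e2 : ℤ) * disp β2 i) with h1 | h1
      · exact Or.inl ⟨this.1, by linarith⟩
      · exact Or.inr ⟨this.2, by linarith⟩
    · have := abs_le.1 (bb e2 β2 hJ (krun_mem hβ2) l2 i)
      have hp : (0 : ℤ) ≤ J * (N * b) := by positivity
      rcases le_total 0 ((e1 : ℤ) * disp β1 i) with h1 | h1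
      · exact Or.inl ⟨by linarith, this.1⟩
      · exact Or.inr ⟨by linarith, this.2⟩

/-- arithmetic for the two-sign case -/
lemma two_arith {lam Hs k m : ℤ} {Hb : ℕ} (hk : 0 < k) (hm : m < 0) (hl : 0 ≤ lam)
    (hH : |Hs| ≤ Hb) (hd : k ∣ lam - Hs) :
    ∃ e : ℕ, lam = Hs + e * k + ((k.toNat * Hb : ℕ) : ℤ) * m := by
  obtain ⟨y, hy⟩ := hd
  have hh := (abs_le.1 hH).2
  have hk' : (k.toNat : ℤ) = k := Int.toNat_of_nonneg hk.le
  have : 0 ≤ y - Hb * m := by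
    by_contra hc
    push Not at hc
    have : y - Hb * m ≤ -1 := by omega
    nlinarith [mul_nonneg (Int.natCast_nonneg Hb) (by linarith : 0 ≤ -m - 1), mul_le_mul_of_nonneg_left this hk.le, mul_nonneg (mul_nonneg (Int.natCast_nonneg Hb) (by linarith : 0 ≤ -m - 1)) hk.le, mul_nonneg (Int.natCast_nonneg Hb) (by linarith : 0 ≤ k - 1)]
  refine ⟨(y - Hb * m).toNat, ?_⟩
  rw [Int.toNat_of_nonneg this]
  push_cast
  rw [hk']
  linarith [mul_comm k y, mul_sub k y (Hb * m), mul_comm (y - Hb * m) k, mul_assoc k Hb m]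

/-- middle lemma -/
lemma mid (hb : Bd E b) (hsafe : ∀ s w, P s (f w) → ∀ i, ¬ A i → 0 ≤ w i)
    {h : Vec 2 →+ ℤ} (hinj : ∀ z, f z = 0 → h z = 0 → z = 0) {H : ℕ}
    (hH : ∀ x : List (Trans 2), (∀ t ∈ x, t ∈ E) → |h (disp x)| ≤ (x.length * H : ℤ))
    (V : Finset (ℕ × ℤ)) (hV : ∀ s g, P s g → (s, g) ∈ V)
    {L N J : ℕ} (hN : V.card = N) (hL : L = N * (N * H) + N) (hJ : J = N * H * (3 * (L * H)))
    {D : ℤ} (hD : 6 * (L * b : ℤ) + 2 * (J * (N * b)) ≤ D)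
    {p q : ℕ} {π : List (Trans 2)} {w1 w2 : Vec 2}
    (hπ0 : KRun E f P p (f w1) π q (f w2)) (hww : w2 = w1 + disp π)
    (hw1 : ∀ i, A i → D ≤ w1 i) (hw2 : ∀ i, A i → D ≤ w2 i) : CL E 2 (5 * L) p w1 q w2 := by
  obtain ⟨P', hP', hπ, hvis⟩ := krun_vis' hπ0
  have hV' : ∀ s g, P' s g → (s, g) ∈ V := fun s g hs => hV s g (hP' s g hs)
  have hsafe' : ∀ s w, P' s (f w) → ∀ i, ¬ A i → 0 ≤ w i := fun s w hs => hsafe s w (hP' _ _ hs)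
  have hNL : N ≤ L := by omega
  -- case 0
  by_cases h0 : ∀ r y c, c ≠ [] → c.length ≤ N → KRun E f P' r y c r y → h (disp c) = 0
  · obtain ⟨σ, cs, s1, s2, s3, s4⟩ := krun_decomp' V hV' hπ
    have e1 : disp π = disp σ := by
      rw [← sub_eq_zero]
      apply hinj
      · have q1 := krun_end hπ
        have q2 := krun_end s1
        rw [map_sub]; linarith
      · rw [s4, add_sub_cancel_left, map_list_sum_disp]
        apply List.sum_eq_zero
        intro y hy
        obtain ⟨c, hc, rfl⟩ := List.mem_map.1 hy
        obtain ⟨c1, c2, r, y, c3⟩ := s3 c hc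
        exact h0 r y c c1 (hN ▸ c2) c3
    have : NR E p w1 σ q (w1 + disp σ) := nr_plain (A := A) hb hsafe' s1 (fun i hA => by
      refine le_trans ?_ (hw1 i hA)
      have q1 : (σ.length * b : ℤ) ≤ L * b := by
        exact_mod_cast Nat.mul_le_mul_right b (by omega)
      have q2 : (0 : ℤ) ≤ L * b := by positivity
      have q3 : (0 : ℤ) ≤ J * (N * b) := by positivity
      linarith)
    rw [← e1, ← hww] at this
    exact (CL.of_run this (L := 5 * L) (by omega)).le (by omega) le_rfl
  push Not at h0
  have shL : ∀ {k : ℤ}, 0 < k → k ≤ N * H → V.card * k.toNat ≤ L := by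
    intro k hk hk2
    have : k.toNat ≤ N * H := by zify; rw [Int.toNat_of_nonneg hk.le]; exact hk2
    rw [hN]
    have := Nat.mul_le_mul_left N this
    omega
  have hcyc : ∀ c : List (Trans 2), c.length ≤ N → (∀ t ∈ c, t ∈ E) → |h (disp c)| ≤ (N * H : ℤ) := by
    intro c hc hcE
    refine (hH c hcE).trans ?_
    exact_mod_cast Nat.mul_le_mul_right H hc
  -- one sign, abstract sign of h
  have one : ∀ h : Vec 2 →+ ℤ, (∀ z, f z = 0 → h z = 0 → z = 0) →
      (∀ c : List (Trans 2), c.length ≤ N → (∀ t ∈ c, t ∈ E) → |h (disp c)| ≤ (N * H : ℤ)) →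
      (∀ r y c, c ≠ [] → c.length ≤ N → KRun E f P' r y c r y → 0 ≤ h (disp c)) →
      (∃ r y c, c ≠ [] ∧ c.length ≤ N ∧ KRun E f P' r y c r y ∧ 0 < h (disp c)) →
      CL E 2 (5 * L) p w1 q w2 := by
    rintro h hinj hcyc hpos ⟨r, y, c, c1, c2, c3, c4⟩
    obtain ⟨π1, π2, e, v1, v2⟩ := hvis r y (krun_head c3)
    have hk := (abs_le.1 (hcyc c c2 (krun_mem c3))).2
    have hkn : ((h (disp c)).toNat : ℤ) = h (disp c) := Int.toNat_of_nonneg c4.le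
    obtain ⟨σ1, a1, a2, a3, a4⟩ := shorten V hV' h (h (disp c)).toNat (by omega) v1
    obtain ⟨σ2, b1, b2, b3, b4⟩ := shorten V hV' h (h (disp c)).toNat (by omega) v2
    rw [hN] at a4 b4
    have a5 := a4 hpos
    have b5 := b4 hpos
    rw [hkn] at a3 b3
    obtain ⟨y, hy⟩ := dvd_add a3 b3
    have hy0 : 0 ≤ y := by
      by_contra hc
      push Not at hc
      nlinarith
    have hnil : KRun E f P' r _ [] r _ := ⟨krun_head c3, rfl, rfl⟩
    refine mid_asm (A := A) (J := J) (h := h) hb hsafe' hinj hπ hww a1 c3 hnil c3 b1 c1 c1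
      (a2.trans (shL c4 hk)) c2 (by simp) c2 (b2.trans (shL c4 hk)) hNL y.toNat 0 ?_ (Or.inr (by omega))
      hD hw1 hw2
    rw [← e, Int.toNat_of_nonneg hy0]
    simp only [disp_append, map_add, disp_nil, map_zero, Nat.cast_zero]
    linarith [mul_comm (h (disp c)) y]
  have two : ∀ h : Vec 2 →+ ℤ, (∀ z, f z = 0 → h z = 0 → z = 0) →
      (∀ x : List (Trans 2), (∀ t ∈ x, t ∈ E) → |h (disp x)| ≤ (x.length * H : ℤ)) →
      (∃ r y c, c ≠ [] ∧ c.length ≤ N ∧ KRun E f P' r y c r y ∧ 0 < h (disp c)) →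
      (∃ r y c, c ≠ [] ∧ c.length ≤ N ∧ KRun E f P' r y c r y ∧ h (disp c) < 0) →
      0 ≤ h (disp π) →
      CL E 2 (5 * L) p w1 q w2 := by
    rintro h hinj hH ⟨r, y, c, c1, c2, c3, c4⟩ ⟨r', y', c', c1', c2', c3', c4'⟩ hlam
    obtain ⟨π1, π2, e, v1, v2⟩ := hvis r y (krun_head c3)
    obtain ⟨π1', π2', e', v1', v2'⟩ := hvis r' y' (krun_head c3')
    have hk : h (disp c) ≤ N * H := by
      refine (abs_le.1 (hH c (krun_mem c3))).2.trans ?_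
      exact_mod_cast Nat.mul_le_mul_right H c2
    have hkn : ((h (disp c)).toNat : ℤ) = h (disp c) := Int.toNat_of_nonneg c4.le
    have Hs : ∀ σ1 σ2 σ3 : List (Trans 2), (∀ t ∈ σ1, t ∈ E) → (∀ t ∈ σ2, t ∈ E) →
        (∀ t ∈ σ3, t ∈ E) → σ1.length ≤ L → σ2.length ≤ L → σ3.length ≤ L →
        |h (disp σ1) + h (disp σ2) + h (disp σ3)| ≤ ((3 * (L * H) : ℕ) : ℤ) := by
      intro σ1 σ2 σ3 m1 m2 m3 l1 l2 l3
      have x1 := abs_le.1 (hH σ1 m1)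
      have x2 := abs_le.1 (hH σ2 m2)
      have x3 := abs_le.1 (hH σ3 m3)
      have y1 : (σ1.length * H : ℤ) ≤ L * H := by exact_mod_cast Nat.mul_le_mul_right H l1
      have y2 : (σ2.length * H : ℤ) ≤ L * H := by exact_mod_cast Nat.mul_le_mul_right H l2
      have y3 : (σ3.length * H : ℤ) ≤ L * H := by exact_mod_cast Nat.mul_le_mul_right H l3
      rw [abs_le]; push_cast
      constructor <;> linarith
    have hJ' : (h (disp c)).toNat * (3 * (L * H)) ≤ J := by
      rw [hJ]
      apply Nat.mul_le_mul_right
      zify; rw [hkn]; exact hk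
    rcases List.append_eq_append_iff.1 (e.trans e'.symm) with ⟨z, hz1, hz2⟩ | ⟨z, hz1, hz2⟩
    · -- π1' = π1 ++ z, π2 = z ++ π2'
      subst hz1 hz2
      have hz := (krun_split_at v1' v1).2
      obtain ⟨σ1, a1, a2, a3, -⟩ := shorten V hV' h (h (disp c)).toNat (by omega) v1
      obtain ⟨σ2, b1, b2, b3, -⟩ := shorten V hV' h (h (disp c)).toNat (by omega) hz
      obtain ⟨σ3, d1, d2, d3, -⟩ := shorten V hV' h (h (disp c)).toNat (by omega) v2'
      have l1 := a2.trans (shL c4 hk)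
      have l2 := b2.trans (shL c4 hk)
      have l3 := d2.trans (shL c4 hk)
      rw [hkn] at a3 b3 d3
      obtain ⟨e0, he0⟩ := two_arith (lam := h (disp π)) c4 c4' hlam
        (Hs σ1 σ2 σ3 (krun_mem a1) (krun_mem b1) (krun_mem d1) l1 l2 l3) (by
          have := dvd_add (dvd_add a3 b3) d3
          rw [← e]; simp only [disp_append, map_add]
          refine dvd_trans this (dvd_of_eq ?_)
          ring)
      exact mid_asm (A := A) (J := J) (h := h) hb hsafe' hinj hπ hww a1 c3 b1 c3' d1 c1 c1'
        l1 c2 l2 c2' l3 hNL e0 ((h (disp c)).toNat * (3 * (L * H))) (by linarith) (Or.inr hJ') hD hw1 hw2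
    · subst hz1 hz2
      have hz := (krun_split_at v1 v1').2
      obtain ⟨σ1, a1, a2, a3, -⟩ := shorten V hV' h (h (disp c)).toNat (by omega) v1'
      obtain ⟨σ2, b1, b2, b3, -⟩ := shorten V hV' h (h (disp c)).toNat (by omega) hz
      obtain ⟨σ3, d1, d2, d3, -⟩ := shorten V hV' h (h (disp c)).toNat (by omega) v2
      have l1 := a2.trans (shL c4 hk)
      have l2 := b2.trans (shL c4 hk)
      have l3 := d2.trans (shL c4 hk)
      rw [hkn] at a3 b3 d3
      obtain ⟨e0, he0⟩ := two_arith (lam := h (disp π)) c4 c4' hlam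
        (Hs σ1 σ2 σ3 (krun_mem a1) (krun_mem b1) (krun_mem d1) l1 l2 l3) (by
          have := dvd_add (dvd_add a3 b3) d3
          rw [← e]; simp only [disp_append, map_add]
          refine dvd_trans this (dvd_of_eq ?_)
          ring)
      exact mid_asm (A := A) (J := J) (h := h) hb hsafe' hinj hπ hww a1 c3' b1 c3 d1 c1' c1
        l1 c2' l2 c2 l3 hNL ((h (disp c)).toNat * (3 * (L * H))) e0 (by linarith) (Or.inl hJ') hD hw1 hw2
  have ninj : ∀ z, f z = 0 → (-h) z = 0 → z = 0 := by
    intro z hz1 hz2; exact hinj z hz1 (by simpa using hz2)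
  have nH : ∀ x : List (Trans 2), (∀ t ∈ x, t ∈ E) → |(-h) (disp x)| ≤ (x.length * H : ℤ) := by
    intro x hx; rw [AddMonoidHom.neg_apply, abs_neg]; exact hH x hx
  have ncyc : ∀ c : List (Trans 2), c.length ≤ N → (∀ t ∈ c, t ∈ E) →
      |(-h) (disp c)| ≤ (N * H : ℤ) := by
    intro x hl hx; rw [AddMonoidHom.neg_apply, abs_neg]; exact hcyc x hl hx
  by_cases hp : ∃ r y c, c ≠ [] ∧ c.length ≤ N ∧ KRun E f P' r y c r y ∧ 0 < h (disp c)
  · by_cases hn : ∃ r y c, c ≠ [] ∧ c.length ≤ N ∧ KRun E f P' r y c r y ∧ h (disp c) < 0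
    · rcases le_total 0 (h (disp π)) with hl | hl
      · exact two h hinj hH hp hn hl
      · refine two (-h) ninj nH ?_ ?_ (by simpa using hl)
        · simpa using hn
        · simpa using hp
    · push Not at hn
      exact one h hinj hcyc hn hp
  · push Not at hp
    refine one (-h) ninj ncyc ?_ ?_
    · simpa using hp
    · obtain ⟨r, y, c, c1, c2, c3, c4⟩ := h0
      refine ⟨r, y, c, c1, c2, c3, ?_⟩
      have := hp r y c c1 c2 c3
      simp only [AddMonoidHom.neg_apply]
      omega
end


/-- linear form -/
def fh (f : Vec 2) : Vec 2 →+ ℤ where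
  toFun z := f 0 * z 0 + f 1 * z 1
  map_zero' := by simp
  map_add' x y := by simp only [Pi.add_apply]; ring

lemma fh_apply (f z : Vec 2) : fh f z = f 0 * z 0 + f 1 * z 1 := rfl

lemma vec_ext {x y : Vec 2} (h0 : x 0 = y 0) (h1 : x 1 = y 1) : x = y := by
  ext i; fin_cases i
  · exact h0
  · exact h1

lemma sq_pos_of {f : Vec 2} (hf : f ≠ 0) : 0 < f 0 * f 0 + f 1 * f 1 := by
  by_contra hc
  push Not at hc
  have h0 : f 0 = 0 := by nlinarith [mul_self_nonneg (f 0), mul_self_nonneg (f 1)]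
  have h1 : f 1 = 0 := by nlinarith [mul_self_nonneg (f 0), mul_self_nonneg (f 1)]
  exact hf (vec_ext h0 h1)

lemma fh_inj {f : Vec 2} (hf : f ≠ 0) (z : Vec 2) (h1 : fh f z = 0)
    (h2 : fh ![-f 1, f 0] z = 0) : z = 0 := by
  have hp := sq_pos_of hf
  simp only [fh_apply, Matrix.cons_val_zero, Matrix.cons_val_one] at h1 h2
  apply vec_ext
  · have : (f 0 * f 0 + f 1 * f 1) * z 0 = 0 := by linear_combination f 0 * h1 - f 1 * h2
    rcases mul_eq_zero.1 this with h | h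
    · omega
    · exact h
  · have : (f 0 * f 0 + f 1 * f 1) * z 1 = 0 := by linear_combination f 1 * h1 + f 0 * h2
    rcases mul_eq_zero.1 this with h | h
    · omega
    · exact h

lemma fh_bd {f z : Vec 2} {M b : ℤ} (hM : ∀ i, |f i| ≤ M) (hb : ∀ i, |z i| ≤ b) :
    |fh f z| ≤ 2 * M * b := by
  rw [fh_apply]
  have h0 : |f 0 * z 0| ≤ M * b := by
    rw [abs_mul]; exact mul_le_mul (hM 0) (hb 0) (abs_nonneg _) ((abs_nonneg _).trans (hM 0))
  have h1 : |f 1 * z 1| ≤ M * b := by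
    rw [abs_mul]; exact mul_le_mul (hM 1) (hb 1) (abs_nonneg _) ((abs_nonneg _).trans (hM 0))
  have := abs_add_le (f 0 * z 0) (f 1 * z 1)
  linarith

lemma krun_Q {Γ : Type} [AddCommGroup Γ] {E : Set (Trans 2)} {ω : Vec 2 →+ Γ} {P : ℕ → Γ → Prop}
    {Q : Finset ℕ} (hQ : ∀ t ∈ E, t.1 ∈ Q ∧ t.2.2 ∈ Q) {π : List (Trans 2)} : ∀ {p g q g'},
    p ∈ Q → KRun E ω P p g π q g' → KRun E ω (fun s x => P s x ∧ s ∈ Q) p g π q g' := by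
  induction π with
  | nil => rintro p g q g' hp ⟨h, rfl, rfl⟩; exact ⟨⟨h, hp⟩, rfl, rfl⟩
  | cons t π ih =>
    rintro p g q g' hp ⟨h, h0, h1, h2⟩
    exact ⟨⟨h, hp⟩, h0, h1, ih (hQ t h0).2 h2⟩

def sN (b B : ℕ) : ℕ := b * (2 * B + 1)
def sH (b M : ℕ) : ℕ := 2 * M * b
def sL (b M B : ℕ) : ℕ := sN b B * (sN b B * sH b M) + sN b B
def sJ (b M B : ℕ) : ℕ := sN b B * sH b M * (3 * (sL b M B * sH b M))
def sD (b M B : ℕ) : ℕ := 6 * (sL b M B * b) + 2 * (sJ b M B * (sN b B * b))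
def sV (b M B : ℕ) : ℕ := b * (2 * (sD b M B * (2 * B + 1))) + 1
def SL (b M B : ℕ) : ℕ := 2 * sV b M B + 5 * sL b M B + 1

lemma krun_short {E : Set (Trans 2)} {P : ℕ → Vec 2 → Prop}
    (hP : ∀ s w, P s w → ∀ i, 0 ≤ w i) (V : Finset (ℕ × Vec 2)) (hV : ∀ s w, P s w → (s, w) ∈ V)
    {p u π q v} (h : KRun E (AddMonoidHom.id _) P p u π q v) {L : ℕ} (hL : V.card ≤ L) :
    CL E 0 L p u q v := by
  obtain ⟨σ, cs, s1, s2, _, _⟩ := krun_decomp' V hV h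
  exact CL.of_run (krun_mono (fun t ht => ht) hP s1) (s2.trans hL)

open Classical in
lemma bad_finset {f : Vec 2} (Q : Finset ℕ) (D B : ℕ) (g0 : ℤ) :
    ∃ V : Finset (ℕ × Vec 2), V.card ≤ Q.card * (2 * (D * (2 * B + 1))) ∧
      ∀ (s : ℕ) (w : Vec 2), s ∈ Q → (∀ i, 0 ≤ w i) → |fh f w - g0| ≤ B →
        (∃ i, (![f 1, f 0] : Vec 2) i ≠ 0 ∧ w i < D) → (s, w) ∈ V := by
  let dec : ℕ × (Fin 2 × (ℕ × ℤ)) → ℕ × Vec 2 := fun x =>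
    (x.1, if h : ∃ w : Vec 2, w x.2.1 = x.2.2.1 ∧ fh f w = x.2.2.2 then h.choose else 0)
  refine ⟨(Q ×ˢ ((Finset.univ : Finset (Fin 2)) ×ˢ ((Finset.range D) ×ˢ
    (Finset.Icc (g0 - B) (g0 + B))))).image dec, ?_, ?_⟩
  · refine Finset.card_image_le.trans ?_
    simp only [Finset.card_product, Finset.card_univ, Fintype.card_fin, Finset.card_range,
      Int.card_Icc]
    rw [show (g0 + B + 1 - (g0 - B)).toNat = 2 * B + 1 by omega]
  · rintro s w hs hw hB ⟨i, hi, hiD⟩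
    refine Finset.mem_image.2 ⟨(s, i, (w i).toNat, fh f w), ?_, ?_⟩
    · have := abs_le.1 hB
      have := hw i
      simp only [Finset.mem_product, Finset.mem_univ, Finset.mem_range, Finset.mem_Icc]
      exact ⟨hs, trivial, by omega, by omega, by omega⟩
    · have hex : ∃ w' : Vec 2, w' i = ((w i).toNat : ℤ) ∧ fh f w' = fh f w :=
        ⟨w, (Int.toNat_of_nonneg (hw i)).symm, rfl⟩
      have hc := hex.choose_spec
      simp only [dec]
      rw [dif_pos hex]
      congr 1
      generalize hex.choose = w' at hc
      obtain ⟨h1, h2⟩ := hc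
      rw [Int.toNat_of_nonneg (hw i)] at h1
      simp only [fh_apply] at h2
      revert hi h1
      fin_cases i
      · intro hi h1
        simp at hi h1
        rw [h1] at h2
        exact vec_ext h1 (mul_left_cancel₀ hi (by linarith))
      · intro hi h1
        simp at hi h1
        rw [h1] at h2
        exact vec_ext (mul_left_cancel₀ hi (by linarith)) h1

lemma strip {E : Set (Trans 2)} {b : ℕ} {Q : Finset ℕ} (hb : Bd E b)
    (hQ : ∀ t ∈ E, t.1 ∈ Q ∧ t.2.2 ∈ Q) (hQc : Q.card = b) {f : Vec 2} (hf : f ≠ 0) {M B : ℕ}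
    (hM : ∀ i, |f i| ≤ M) {g0 : ℤ} {p q : ℕ} {u v : Vec 2} {π : List (Trans 2)} (hp : p ∈ Q)
    (h : KRun E (AddMonoidHom.id _) (fun _ w => (∀ i, 0 ≤ w i) ∧ |fh f w - g0| ≤ B) p u π q v) :
    CL E 2 (SL b M B) p u q v := by
  obtain ⟨V, hVc, hV⟩ := bad_finset (f := f) Q (sD b M B) B g0
  rw [hQc] at hVc
  set A : Fin 2 → Prop := fun i => (![f 1, f 0] : Vec 2) i ≠ 0 with hA
  let G : ℕ → Vec 2 → Prop := fun _ w => ∀ i, A i → (sD b M B : ℤ) ≤ w i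
  have hbad : ∀ (s : ℕ) (w : Vec 2), (((∀ i, 0 ≤ w i) ∧ |fh f w - g0| ≤ B) ∧ s ∈ Q) → ¬ G s w →
      (s, w) ∈ V := by
    rintro s w ⟨⟨h1, h2⟩, h3⟩ h4
    apply hV s w h3 h1 h2
    simp only [G] at h4
    push Not at h4
    exact h4
  have h' := krun_Q hQ hp h
  have sV1 : V.card + 1 ≤ sV b M B := by unfold sV; omega
  have shortbad : ∀ {p u π q v}, KRun E (AddMonoidHom.id _)
      (fun s w => (((∀ i, 0 ≤ w i) ∧ |fh f w - g0| ≤ B) ∧ s ∈ Q) ∧ ¬ G s w) p u π q v →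
      CL E 0 (sV b M B) p u q v := by
    intro p u π q v hh
    exact krun_short (fun s w hw => hw.1.1.1) V (fun s w hw => hbad s w hw.1 hw.2) hh (by omega)
  rcases krun_firstsplit G h' with h1 | ⟨s, w, π1, π2, rfl, hG, h1, h2⟩
  · exact (shortbad h1).le (by omega) (by unfold SL; omega)
  have c1 : CL E 0 (sV b M B) p u s w := by
    refine krun_short (fun s w hw => hw.1.1.1) (insert (s, w) V) ?_ h1
      ((Finset.card_insert_le _ _).trans sV1)
    rintro s' w' ⟨h3, h4 | ⟨rfl, rfl⟩⟩
    · exact Finset.mem_insert_of_mem (hbad _ _ h3 h4)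
    · exact Finset.mem_insert_self _ _
  rcases krun_lastsplit G h2 with h3 | ⟨s', w', π3, hG', h3, h4⟩
  · exact absurd hG (krun_head h3).2
  have c2 : CL E 2 (5 * sL b M B) s w s' w' := by
    have hr := krun_map (P' := fun s γ => s ∈ Q ∧ |γ - g0| ≤ B ∧ ∀ i, ¬ A i → 0 ≤ f i * γ)
      (ω' := fh f) (E' := E) (fh f) (fun g z => by simp) (by
        rintro s w ⟨⟨h1, h2⟩, h3⟩
        refine ⟨h3, h2, ?_⟩
        have := h1 0
        have := h1 1
        rw [Fin.forall_fin_two]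
        simp only [hA, fh_apply, Matrix.cons_val_zero, Matrix.cons_val_one, not_not]
        constructor
        · intro h0; rw [h0, zero_mul, add_zero, ← mul_assoc]
          exact mul_nonneg (mul_self_nonneg _) (h1 0)
        · intro h0; rw [h0, zero_mul, zero_add, ← mul_assoc]
          exact mul_nonneg (mul_self_nonneg _) (h1 1)) (fun t _ ht => ht) h3
    refine mid (A := A) (h := fh ![-f 1, f 0]) (H := sH b M) (N := sN b B) (L := sL b M B)
      (J := sJ b M B) (D := sD b M B) hb ?_ (fh_inj hf) ?_ (Q ×ˢ Finset.Icc (g0 - B) (g0 + B)) ?_ ?_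
      rfl rfl ?_ hr ?_ hG hG'
    · rintro s w ⟨_, _, h⟩ i hi
      have h5 := h i hi
      have hsq := sq_pos_of hf
      revert hi h5
      simp only [hA, fh_apply]
      fin_cases i
      · simp only [Fin.zero_eta, Matrix.cons_val_zero, not_not]
        intro h0 h5
        refine nonneg_of_mul_nonneg_right (le_of_le_of_eq h5 ?_) hsq
        rw [h0]; ring
      · simp only [Fin.mk_one, Matrix.cons_val_one, not_not]
        intro h0 h5
        have h0 : f 0 = 0 := h0
        refine nonneg_of_mul_nonneg_right (le_of_le_of_eq h5 ?_) hsq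
        rw [h0]; ring
    · intro x hx
      have h5 := fh_bd (f := ![-f 1, f 0]) (z := disp x) (M := M) (b := x.length * b) (by
        rw [Fin.forall_fin_two]; simp [hM]) (fun i => disp_bd hb hx i)
      refine h5.trans (le_of_eq ?_)
      unfold sH; push_cast; ring
    · rintro s g ⟨h5, h6, _⟩
      have := abs_le.1 h6
      simp only [Finset.mem_product, Finset.mem_Icc]
      exact ⟨h5, by omega, by omega⟩
    · rw [Finset.card_product, Int.card_Icc, hQc]
      rw [show (g0 + B + 1 - (g0 - B)).toNat = 2 * B + 1 by omega]; rfl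
    · unfold sD; push_cast; rfl
    · have := krun_end h3
      simpa using this
  rcases h4 with ⟨rfl, rfl⟩ | ⟨t, π4, t1, t2, t3, _⟩
  · exact (c1.trans c2).le (by omega) (by unfold SL; omega)
  · have c3 := shortbad t3
    have c4 : CL E 0 1 s' w' t.2.2 (w' + t.2.1) :=
      CL.of_run (π := [t]) ⟨fun i => (krun_last h3).1.1 i, t1, t2, (krun_head t3).1.1.1, rfl, rfl⟩ (by simp)
    exact (c1.trans (c2.trans (c4.trans c3))).le (by omega) (by unfold SL; omega)



def dt (x y : Vec 2) : ℤ := x 0 * y 1 - x 1 * y 0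

lemma half_min (e : Vec 2) (ε : ℤ) (hε : ε * ε = 1) (S : Finset (Vec 2)) :
    S.Nonempty → (∀ c ∈ S, 0 < ε * dt e c) → ∃ m ∈ S, ∀ c ∈ S, 0 ≤ ε * dt m c := by
  classical
  induction S using Finset.induction_on with
  | empty => intro h; simp at h
  | insert a S ha ih =>
    intro _ hS
    have haa : 0 ≤ ε * dt a a := by simp [dt, mul_comm]
    by_cases hne : S.Nonempty
    · obtain ⟨m, hm, hmc⟩ := ih hne (fun c hc => hS c (by simp [hc]))
      rcases le_total 0 (ε * dt a m) with h1 | h1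
      · refine ⟨a, by simp, ?_⟩
        intro c hc
        rcases Finset.mem_insert.1 hc with rfl | hc'
        · exact haa
        · have p1 := hS m (by simp [hm])
          have p2 := hS c hc
          have p3 := hS a (by simp)
          have p4 := hmc c hc'
          have key : (ε * dt a c) * (ε * dt e m) =
              (ε * dt a m) * (ε * dt e c) + (ε * dt m c) * (ε * dt e a) := by
            simp only [dt]; ring
          have : 0 ≤ (ε * dt a c) * (ε * dt e m) := by rw [key]; positivity
          exact nonneg_of_mul_nonneg_left this p1
      · refine ⟨m, by simp [hm], ?_⟩
        intro c hc
        rcases Finset.mem_insert.1 hc with rfl | hc'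
        · have : ε * dt m c = -(ε * dt c m) := by simp only [dt]; ring
          rw [this]; linarith
        · exact hmc c hc'
    · rw [Finset.not_nonempty_iff_eq_empty] at hne
      subst hne
      exact ⟨a, by simp, by simpa using haa⟩

/-- `e` is in the cone spanned by the positively oriented pair `b1 b2` -/
def InCone (b1 b2 e : Vec 2) : Prop := 0 < dt b1 b2 ∧ 0 ≤ dt b1 e ∧ 0 ≤ dt e b2

lemma farkas (C : Finset (Vec 2)) (e : Vec 2) (hind : ∃ c1 ∈ C, ∃ c2 ∈ C, dt c1 c2 ≠ 0)
    (hF : ∀ c ∈ C, c ≠ 0 → ∀ ε : ℤ, ε * ε = 1 → (∀ c' ∈ C, 0 ≤ ε * dt c c') → 0 ≤ ε * dt c e) :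
    ∃ b1 ∈ C, ∃ b2 ∈ C, InCone b1 b2 e := by
  classical
  have anti : ∀ x y : Vec 2, dt x y = - dt y x := by intro x y; simp only [dt]; ring
  have dt0 : ∀ y : Vec 2, dt 0 y = 0 := by intro y; simp [dt]
  by_cases h1 : (C.filter fun c => 0 < dt e c).Nonempty
  · obtain ⟨m, hm, hmc⟩ := half_min e 1 (by norm_num) _ h1 (fun c hc => by
      simpa using (Finset.mem_filter.1 hc).2)
    obtain ⟨hmC, hme⟩ := Finset.mem_filter.1 hm
    by_cases h2 : ∃ c ∈ C, dt e c ≤ 0 ∧ 0 < dt c m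
    · obtain ⟨c, hc, h3, h4⟩ := h2
      exact ⟨c, hc, m, hmC, h4, by rw [anti]; omega, hme.le⟩
    · push Not at h2
      have := hF m hmC (by rintro rfl; rw [anti, dt0] at hme; simp at hme) 1 (by norm_num) (by
        intro c hc
        by_cases h3 : 0 < dt e c
        · exact hmc c (Finset.mem_filter.2 ⟨hc, h3⟩)
        · have := h2 c hc (by omega)
          rw [anti m c]; omega)
      rw [anti m e] at this; omega
  by_cases h1' : (C.filter fun c => 0 < -1 * dt e c).Nonempty
  · obtain ⟨m, hm, hmc⟩ := half_min e (-1) (by norm_num) _ h1' (fun c hc => by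
      simpa using (Finset.mem_filter.1 hc).2)
    obtain ⟨hmC, hme⟩ := Finset.mem_filter.1 hm
    by_cases h2 : ∃ c ∈ C, 0 ≤ dt e c ∧ 0 < dt m c
    · obtain ⟨c, hc, h3, h4⟩ := h2
      exact ⟨m, hmC, c, hc, h4, by rw [anti]; omega, h3⟩
    · push Not at h2
      have := hF m hmC (by rintro rfl; rw [anti, dt0] at hme; simp at hme) (-1) (by norm_num) (by
        intro c hc
        by_cases h3 : 0 < -1 * dt e c
        · exact hmc c (Finset.mem_filter.2 ⟨hc, h3⟩)
        · have := h2 c hc (by omega)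
          omega)
      rw [anti m e] at this; omega
  rw [Finset.not_nonempty_iff_eq_empty, Finset.filter_eq_empty_iff] at h1 h1'
  have hz : ∀ c ∈ C, dt e c = 0 := by
    intro c hc
    have := h1 hc; have := h1' hc; omega
  obtain ⟨c1, hc1, c2, hc2, hd⟩ := hind
  have z1 := hz c1 hc1
  have z2 := hz c2 hc2
  rcases lt_or_gt_of_ne hd with h | h
  · exact ⟨c2, hc2, c1, hc1, by rw [anti]; omega, by rw [anti]; omega, by omega⟩
  · exact ⟨c1, hc1, c2, hc2, h, by rw [anti]; omega, by omega⟩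

lemma dt_bd {x y : Vec 2} {R W : ℤ} (hx : ∀ i, |x i| ≤ R) (hy : ∀ i, |y i| ≤ W) :
    |dt x y| ≤ 2 * R * W := by
  have := fh_bd (f := ![-x 1, x 0]) (z := y) (M := R) (b := W) (by
    rw [Fin.forall_fin_two]; simp [hx]) hy
  convert this using 2
  simp [dt, fh_apply]; ring

lemma cramer (x y z : Vec 2) : dt x y • z = dt z y • x + dt x z • y := by
  apply vec_ext <;> simp only [Pi.add_apply, zsm, dt] <;> ring

/-- integer part of a cone decomposition -/
lemma cone_floor {b1 b2 e : Vec 2} (h : InCone b1 b2 e) {R : ℤ} (h1 : ∀ i, |b1 i| ≤ R)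
    (h2 : ∀ i, |b2 i| ≤ R) : ∃ l1 l2 : ℕ, ∀ i, |(e - (l1 • b1 + l2 • b2)) i| ≤ 2 * R := by
  obtain ⟨hD, ha, hb⟩ := h
  refine ⟨(dt e b2 / dt b1 b2).toNat, (dt b1 e / dt b1 b2).toNat, ?_⟩
  intro i
  have n1 : 0 ≤ dt e b2 / dt b1 b2 := Int.ediv_nonneg hb hD.le
  have n2 : 0 ≤ dt b1 e / dt b1 b2 := Int.ediv_nonneg ha hD.le
  simp only [Pi.sub_apply, Pi.add_apply, nsm, Int.toNat_of_nonneg n1, Int.toNat_of_nonneg n2]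
  have c := congrFun (cramer b1 b2 e) i
  simp only [Pi.add_apply, zsm] at c
  have m1 := Int.emod_add_mul_ediv (dt e b2) (dt b1 b2)
  have m2 := Int.emod_add_mul_ediv (dt b1 e) (dt b1 b2)
  have r1 := Int.emod_nonneg (dt e b2) hD.ne'
  have r2 := Int.emod_nonneg (dt b1 e) hD.ne'
  have s1 := Int.emod_lt_of_pos (dt e b2) hD
  have s2 := Int.emod_lt_of_pos (dt b1 e) hD
  set D := dt b1 b2
  set r := dt e b2 % D
  set s := dt b1 e % D
  set x := dt e b2 / D
  set y := dt b1 e / D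
  have key : D * (e i - (x * b1 i + y * b2 i)) = r * b1 i + s * b2 i := by
    rw [← m1, ← m2] at c; linear_combination c
  have q1 : |r * b1 i| ≤ D * R := by
    rw [abs_mul, abs_of_nonneg r1]; exact mul_le_mul s1.le (h1 i) (abs_nonneg _) hD.le
  have q2 : |s * b2 i| ≤ D * R := by
    rw [abs_mul, abs_of_nonneg r2]; exact mul_le_mul s2.le (h2 i) (abs_nonneg _) hD.le
  have q3 : D * |e i - (x * b1 i + y * b2 i)| ≤ D * (2 * R) := by
    rw [← abs_of_pos hD, ← abs_mul, abs_of_pos hD, key]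
    have := abs_add_le (r * b1 i) (s * b2 i)
    linarith
  exact le_of_mul_le_mul_left q3 hD

def latJ (R W n : ℕ) : ℕ := 2 * R * R + 2 * (2 * R * (W + n * (2 * R * R * R)))

lemma lat (C : Finset (Vec 2)) {R W : ℕ} (hR : ∀ c ∈ C, ∀ i, |c i| ≤ (R : ℤ))
    (hind : ∃ c1 ∈ C, ∃ c2 ∈ C, dt c1 c2 ≠ 0) (ρ : Vec 2) (y : Vec 2 → ℤ)
    (hy : ρ = ∑ c ∈ C, y c • c) (hW : ∀ i, |ρ i| ≤ (W : ℤ)) :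
    ∃ y' : Vec 2 → ℤ, ρ = ∑ c ∈ C, y' c • c ∧ ∀ c ∈ C, |y' c| ≤ (latJ R W C.card : ℤ) := by
  classical
  obtain ⟨c1, hc1, c2, hc2, hd⟩ := hind
  set D := dt c1 c2 with hDdef
  have hDb : |D| ≤ 2 * R * R := dt_bd (hR c1 hc1) (hR c2 hc2)
  have hD1 : 1 ≤ |D| := Int.one_le_abs hd
  set z : Vec 2 := ∑ c ∈ C, (y c / D) • c with hz
  have e1 : ρ = ∑ c ∈ C, (y c % D) • c + D • z := by
    rw [hy, hz, Finset.smul_sum, ← Finset.sum_add_distrib]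
    refine Finset.sum_congr rfl fun c _ => ?_
    rw [smul_smul, ← add_smul, Int.emod_add_mul_ediv]
  have rb : ∀ c, |y c % D| ≤ |D| := by
    intro c
    rw [abs_of_nonneg (Int.emod_nonneg _ hd)]
    exact (Int.emod_lt_abs _ hd).le
  have sb : ∀ i, |(∑ c ∈ C, (y c % D) • c) i| ≤ C.card * (2 * R * R * R : ℤ) := by
    intro i
    rw [Finset.sum_apply]
    refine (Finset.abs_sum_le_sum_abs _ _).trans ?_
    refine (Finset.sum_le_card_nsmul _ _ (2 * R * R * R : ℤ) ?_).trans (by simp)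
    intro c hc
    rw [zsm, abs_mul]
    exact mul_le_mul ((rb c).trans hDb) (hR c hc i) (abs_nonneg _) (by positivity)
  have zb : ∀ i, |(D • z) i| ≤ (W + C.card * (2 * R * R * R) : ℤ) := by
    intro i
    have : (D • z) i = ρ i - (∑ c ∈ C, (y c % D) • c) i := by
      rw [e1]; simp
    rw [this]
    have h3 := abs_sub (ρ i) ((∑ c ∈ C, (y c % D) • c) i)
    have := hW i; have := sb i
    linarith
  have zb' : ∀ i, |z i| ≤ (W + C.card * (2 * R * R * R) : ℤ) := by
    intro i
    refine le_trans ?_ (zb i)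
    rw [zsm, abs_mul]
    nlinarith [abs_nonneg (z i)]
  have k1 : |dt z c2| ≤ 2 * R * (W + C.card * (2 * R * R * R) : ℤ) := by
    have := dt_bd zb' (hR c2 hc2)
    refine this.trans (le_of_eq ?_); ring
  have k2 : |dt c1 z| ≤ 2 * R * (W + C.card * (2 * R * R * R) : ℤ) := dt_bd (hR c1 hc1) zb'
  refine ⟨fun c => y c % D + (if c = c1 then dt z c2 else 0) + (if c = c2 then dt c1 z else 0), ?_, ?_⟩
  · simp only [add_smul, Finset.sum_add_distrib, ite_smul, zero_smul]
    rw [Finset.sum_ite_eq', Finset.sum_ite_eq', if_pos hc1, if_pos hc2]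
    rw [add_assoc, ← cramer, ← hDdef]
    exact e1
  · intro c _
    have t1 : |(if c = c1 then dt z c2 else 0)| ≤ 2 * R * (W + C.card * (2 * R * R * R) : ℤ) := by
      split_ifs
      · exact k1
      · simp; positivity
    have t2 : |(if c = c2 then dt c1 z else 0)| ≤ 2 * R * (W + C.card * (2 * R * R * R) : ℤ) := by
      split_ifs
      · exact k2
      · simp; positivity
    have t3 := (rb c).trans hDb
    have t4 := abs_add_three (y c % D) (if c = c1 then dt z c2 else 0) (if c = c2 then dt c1 z else 0)
    refine t4.trans ?_
    unfold latJ; push_cast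
    linarith



/-- plain paths -/
def PR (E : Set (Trans 2)) (p : ℕ) (π : List (Trans 2)) (q : ℕ) : Prop :=
  KRun E (0 : Vec 2 →+ ℤ) (fun _ g => g = 0) p 0 π q 0

lemma pr_of_krun {Γ : Type} [AddCommGroup Γ] {E : Set (Trans 2)} {ω : Vec 2 →+ Γ}
    {P : ℕ → Γ → Prop} {p g π q g'} (h : KRun E ω P p g π q g') : PR E p π q :=
  krun_map (Δ := ℤ) (ω' := (0 : Vec 2 →+ ℤ)) (P' := fun _ g => g = 0) (fun _ => (0 : ℤ))
    (fun _ _ => by simp) (fun _ _ _ => rfl) (fun _ _ h => h) h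

lemma pr_nil {E : Set (Trans 2)} {p} : PR E p [] p := ⟨rfl, rfl, rfl⟩

lemma pr_trans {E : Set (Trans 2)} {p π q π' r} (h : PR E p π q) (h' : PR E q π' r) :
    PR E p (π ++ π') r := krun_trans h h'

lemma pr_pow {E : Set (Trans 2)} {p β} (h : PR E p β p) (n : ℕ) :
    PR E p (List.replicate n β).flatten p := krun_pow (krun_head h) h n

lemma pr_decomp {E : Set (Trans 2)} {Q : Finset ℕ} {b : ℕ} (hQ : ∀ t ∈ E, t.1 ∈ Q ∧ t.2.2 ∈ Q)
    (hQc : Q.card = b) {p π q} (hp : p ∈ Q) (h : PR E p π q) :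
    ∃ (σ : List (Trans 2)) (cs : List (List (Trans 2))), PR E p σ q ∧ σ.length ≤ b ∧
      (∀ c ∈ cs, c ≠ [] ∧ c.length ≤ b ∧ ∃ r, PR E r c r) ∧
      disp π = disp σ + (cs.map disp).sum := by
  have h' := krun_Q hQ hp h
  obtain ⟨σ, cs, h1, h2, h3, h4⟩ := krun_decomp' (Q ×ˢ {(0 : ℤ)}) (by
    rintro s g ⟨rfl, hs⟩; simp [hs]) h'
  have hc : (Q ×ˢ {(0 : ℤ)}).card = b := by simp [hQc]
  rw [hc] at h2 h3
  refine ⟨σ, cs, pr_of_krun h1, h2, ?_, h4⟩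
  intro c hc
  obtain ⟨a1, a2, r, k, a3⟩ := h3 c hc
  exact ⟨a1, a2, r, pr_of_krun a3⟩

lemma pr_short {E : Set (Trans 2)} {Q : Finset ℕ} {b : ℕ} (hQ : ∀ t ∈ E, t.1 ∈ Q ∧ t.2.2 ∈ Q)
    (hQc : Q.card = b) {p π q} (hp : p ∈ Q) (h : PR E p π q) :
    ∃ σ : List (Trans 2), PR E p σ q ∧ σ.length ≤ b := by
  obtain ⟨σ, cs, h1, h2, _⟩ := pr_decomp hQ hQc hp h
  exact ⟨σ, h1, h2⟩

lemma pr_closed {E : Set (Trans 2)} {Q : Finset ℕ} {b : ℕ} (hQ : ∀ t ∈ E, t.1 ∈ Q ∧ t.2.2 ∈ Q)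
    (hQc : Q.card = b) {p π} (hp : p ∈ Q) (h : PR E p π p) :
    ∃ cs : List (List (Trans 2)), (∀ c ∈ cs, c ≠ [] ∧ c.length ≤ b ∧ ∃ r, PR E r c r) ∧
      disp π = (cs.map disp).sum := by
  obtain ⟨σ, cs, h1, h2, h3, h4⟩ := pr_decomp hQ hQc hp h
  by_cases hs : σ = []
  · subst hs; exact ⟨cs, h3, by simpa using h4⟩
  · refine ⟨σ :: cs, ?_, by simpa using h4⟩
    intro d hd
    rcases List.mem_cons.1 hd with rfl | hd
    · exact ⟨hs, h2, p, h1⟩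
    · exact h3 d hd

/-- cycle with detour -/
def Cyc (E : Set (Trans 2)) (p Pl : ℕ) (z s : Vec 2) : Prop :=
  ∃ (r : ℕ) (xt β fro : List (Trans 2)), PR E p xt r ∧ PR E r β r ∧ PR E r fro p ∧ β ≠ [] ∧
    xt.length ≤ Pl ∧ β.length ≤ Pl ∧ fro.length ≤ Pl ∧ disp β = z ∧ disp xt + disp fro = s

lemma Cyc.mono {E : Set (Trans 2)} {p Pl Pl' : ℕ} {z s : Vec 2} (h : Cyc E p Pl z s)
    (hl : Pl ≤ Pl') : Cyc E p Pl' z s := by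
  obtain ⟨r, xt, β, fro, h1, h2, h3, h4, h5, h6, h7, h8⟩ := h
  exact ⟨r, xt, β, fro, h1, h2, h3, h4, h5.trans hl, h6.trans hl, h7.trans hl, h8⟩

lemma Cyc.zbd {E : Set (Trans 2)} {b : ℕ} (hb : Bd E b) {p Pl : ℕ} {z s : Vec 2}
    (h : Cyc E p Pl z s) (i : Fin 2) : |z i| ≤ ((Pl * b : ℕ) : ℤ) := by
  obtain ⟨r, xt, β, fro, h1, h2, h3, h4, h5, h6, h7, rfl, h9⟩ := h
  exact disp_bd' hb (krun_mem h2) h6 i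

lemma Cyc.sbd {E : Set (Trans 2)} {b : ℕ} (hb : Bd E b) {p Pl : ℕ} {z s : Vec 2}
    (h : Cyc E p Pl z s) (i : Fin 2) : |s i| ≤ ((2 * (Pl * b) : ℕ) : ℤ) := by
  obtain ⟨r, xt, β, fro, h1, h2, h3, h4, h5, h6, h7, rfl, rfl⟩ := h
  have a1 := disp_bd' hb (krun_mem h1) h5 i
  have a2 := disp_bd' hb (krun_mem h3) h7 i
  have a3 := abs_add_le (disp xt i) (disp fro i)
  simp only [Pi.add_apply]
  push_cast at *
  linarith

lemma Cyc.pump {E : Set (Trans 2)} {p Pl : ℕ} {z s : Vec 2} (h : Cyc E p Pl z s) (n : ℕ) :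
    ∃ x : List (Trans 2), PR E p x p ∧ disp x = s + n • z ∧ x.length ≤ (n + 2) * Pl := by
  obtain ⟨r, xt, β, fro, h1, h2, h3, h4, h5, h6, h7, rfl, rfl⟩ := h
  refine ⟨xt ++ (List.replicate n β).flatten ++ fro, pr_trans (pr_trans h1 (pr_pow h2 n)) h3, ?_, ?_⟩
  · rw [disp_append, disp_append, disp_pow]; abel
  · have : (List.replicate n β).flatten.length = n * β.length := by simp
    rw [List.length_append, List.length_append, this]
    have := Nat.mul_le_mul_left n h6
    nlinarith

/-- strong connectivity -/
def SC (E : Set (Trans 2)) (p : ℕ) : Prop :=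
  ∀ t ∈ E, (∃ x, PR E p x t.1) ∧ ∃ x, PR E t.1 x p

lemma cyc_of_closed {E : Set (Trans 2)} {Q : Finset ℕ} {b : ℕ}
    (hQ : ∀ t ∈ E, t.1 ∈ Q ∧ t.2.2 ∈ Q) (hQc : Q.card = b) {p : ℕ} (hp : p ∈ Q) (hsc : SC E p)
    {r c} (h : PR E r c r) (hc : c ≠ []) (hl : c.length ≤ b) : ∃ s, Cyc E p b (disp c) s := by
  obtain ⟨t, c', rfl⟩ := List.exists_cons_of_ne_nil hc
  have ht : t ∈ E := h.2.1
  have hr : t.1 = r := h.2.2.1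
  subst hr
  obtain ⟨⟨x, hx⟩, ⟨y, hy⟩⟩ := hsc t ht
  obtain ⟨x', hx', lx⟩ := pr_short hQ hQc hp hx
  obtain ⟨y', hy', ly⟩ := pr_short hQ hQc (hQ t ht).1 hy
  exact ⟨_, t.1, x', t :: c', y', hx', h, hy', hc, lx, hl, ly, rfl, rfl⟩

def axS (b P : ℕ) : ℕ := 4 * (P * b)
def axT (b P : ℕ) : ℕ := axS b P + 2 * (P * b) * axS b P * (P * b) + 2 * (P * b) * axS b P + 1
def axP (b P : ℕ) : ℕ := (axT b P * (P * b) + axS b P + 2) * P + (axT b P * (P * b) + 2) * P +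
  (P * b) * (4 * P)

set_option maxHeartbeats 1000000 in
lemma axis {E : Set (Trans 2)} {b : ℕ} (hb : Bd E b) {p P : ℕ} {b1 s1 b2 s2 : Vec 2}
    (h1 : Cyc E p P b1 s1) (h2 : Cyc E p P b2 s2) (hd : 0 < dt b1 b2) (i : Fin 2)
    (hi : b1 i * b2 i < 0) :
    ∃ h s, Cyc E p (axP b P) h s ∧ h i = 0 ∧ 0 < dt b1 h ∧ 0 < dt h b2 := by
  set R : ℕ := P * b with hR
  set S : ℕ := axS b P with hS
  set t : ℕ := axT b P with ht
  have htv : (t : ℤ) = S + 2 * R * S * R + 2 * R * S + 1 := by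
    rw [ht, axT]; push_cast; rw [← hS, hR]; push_cast; ring
  set s : Vec 2 := s1 + s2 with hs
  have sb : ∀ j, |s j| ≤ (S : ℤ) := by
    intro j
    have a1 := h1.sbd hb j
    have a2 := h2.sbd hb j
    have a3 := abs_add_le (s1 j) (s2 j)
    simp only [hs, hS, axS, Pi.add_apply]
    push_cast at *
    linarith
  have r1 := h1.zbd hb
  have r2 := h2.zbd hb
  rw [← hR] at r1 r2
  have d1 : |dt b1 s| ≤ 2 * R * S := dt_bd r1 sb
  have d2 : |dt s b2| ≤ 2 * R * S := by
    refine (dt_bd sb r2).trans (le_of_eq ?_); ring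
  have x0 : b1 i ≠ 0 := by intro h; rw [h] at hi; simp at hi
  have y0 : b2 i ≠ 0 := by intro h; rw [h] at hi; simp at hi
  have xa : 1 ≤ |b1 i| := Int.one_le_abs x0
  have ya : 1 ≤ |b2 i| := Int.one_le_abs y0
  -- sign
  obtain ⟨ε, hε, hx, hy⟩ : ∃ ε : ℤ, ε * ε = 1 ∧ b1 i = ε * |b1 i| ∧ b2 i = -ε * |b2 i| := by
    rcases lt_or_gt_of_ne x0 with h | h
    · have : 0 < b2 i := by nlinarith
      exact ⟨-1, by norm_num, by rw [abs_of_neg h]; ring, by rw [abs_of_pos this]; ring⟩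
    · have : b2 i < 0 := by nlinarith
      exact ⟨1, by norm_num, by rw [abs_of_pos h]; ring, by rw [abs_of_neg this]; ring⟩
  have hεs : |ε * s i| ≤ S := by
    have : |ε| = 1 := by
      have h1 : |ε| * |ε| = 1 := by rw [← abs_mul, hε]; norm_num
      nlinarith [abs_nonneg ε]
    rw [abs_mul, this, one_mul]; exact sb i
  obtain ⟨hεs1, hεs2⟩ := abs_le.1 hεs
  have tpos : (0 : ℤ) ≤ t := by positivity
  have Rn : (0 : ℤ) ≤ R := by positivity
  have Sn : (0 : ℤ) ≤ S := by positivity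
  have RS : (0 : ℤ) ≤ 2 * R * S := by positivity
  have RSR : (0 : ℤ) ≤ 2 * R * S * R := by positivity
  have ty : (t : ℤ) ≤ t * |b2 i| := le_mul_of_one_le_right tpos ya
  have n1n : 0 ≤ t * |b2 i| - ε * s i := by linarith
  obtain ⟨n1, hn1⟩ := Int.eq_ofNat_of_zero_le n1n
  obtain ⟨q, hq⟩ := Int.eq_ofNat_of_zero_le (abs_nonneg (b1 i))
  obtain ⟨y, hyy⟩ := Int.eq_ofNat_of_zero_le (abs_nonneg (b2 i))
  have hqR : q ≤ R := by have := r1 i; rw [hq] at this; exact_mod_cast this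
  have hyR : y ≤ R := by have := r2 i; rw [hyy] at this; exact_mod_cast this
  have hq1 : 1 ≤ q := by have := xa; rw [hq] at this; exact_mod_cast this
  have hn1R : n1 ≤ t * R + S := by
    zify; rw [← hn1, hyy]
    have : (t : ℤ) * y ≤ t * R := by
      apply mul_le_mul_of_nonneg_left _ tpos
      exact_mod_cast hyR
    linarith
  obtain ⟨w1, p1, dw1, l1⟩ := h1.pump n1
  obtain ⟨w2, p2, dw2, l2⟩ := h2.pump (t * q)
  obtain ⟨w3, p3, dw3, l3⟩ := h1.pump 0
  obtain ⟨w4, p4, dw4, l4⟩ := h2.pump 0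
  set W := w1 ++ w2 ++ (List.replicate (q - 1) (w3 ++ w4)).flatten with hW
  have pW : PR E p W p := pr_trans (pr_trans p1 p2) (pr_pow (pr_trans p3 p4) _)
  have dW : disp W = q • s + n1 • b1 + (t * q) • b2 := by
    rw [hW, disp_append, disp_append, disp_pow, disp_append, dw1, dw2, dw3, dw4, hs]
    obtain ⟨q', rfl⟩ : ∃ q', q = q' + 1 := ⟨q - 1, by omega⟩
    simp only [zero_smul, add_zero, Nat.add_sub_cancel, succ_nsmul]
    abel
  have dWi : ∀ j, disp W j = q * s j + n1 * b1 j + t * q * b2 j := by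
    intro j; rw [dW]; simp only [Pi.add_apply, nsm]; push_cast; ring
  have e1 : 0 < dt b1 (disp W) := by
    have : dt b1 (disp W) = q * (dt b1 s + t * dt b1 b2) := by
      simp only [dt, dWi]; ring
    rw [this]
    have := (abs_le.1 d1).1
    have h4 : (t : ℤ) ≤ t * dt b1 b2 := le_mul_of_one_le_right tpos (by omega)
    have h3 : 0 < dt b1 s + t * dt b1 b2 := by linarith
    have : (0 : ℤ) < q := by exact_mod_cast hq1
    exact mul_pos this h3
  have e2 : 0 < dt (disp W) b2 := by
    have : dt (disp W) b2 = q * dt s b2 + n1 * dt b1 b2 := by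
      simp only [dt, dWi]; ring
    rw [this, ← hn1]
    have h3 := (abs_le.1 d2).1
    have h4 : (q : ℤ) * (2 * R * S) ≤ R * (2 * R * S) :=
      mul_le_mul_of_nonneg_right (by exact_mod_cast hqR) RS
    have h5 : -((q : ℤ) * (2 * R * S)) ≤ q * dt s b2 := by
      have := mul_le_mul_of_nonneg_left h3 (Int.natCast_nonneg q)
      linarith
    have h6 : t * |b2 i| - ε * s i ≤ (t * |b2 i| - ε * s i) * dt b1 b2 :=
      le_mul_of_one_le_right n1n (by omega)
    have h7 : (R : ℤ) * (2 * R * S) = 2 * R * S * R := by ring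
    linarith
  refine ⟨disp W, 0, ⟨p, [], W, [], pr_nil, pW, pr_nil, ?_, by simp, ?_, by simp, rfl, by simp⟩,
    ?_, e1, e2⟩
  · intro h0
    rw [h0] at e1; simp [dt] at e1
  · have lf : (List.replicate (q - 1) (w3 ++ w4)).flatten.length = (q - 1) * (w3.length + w4.length) := by
      simp
    rw [hW, List.length_append, List.length_append, lf]
    have a1 : (q - 1) * (w3.length + w4.length) ≤ R * (4 * P) :=
      Nat.mul_le_mul (by omega) (by omega)
    have a2 : (n1 + 2) * P ≤ (t * R + S + 2) * P := Nat.mul_le_mul_right _ (by omega)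
    have a3 : (t * q + 2) * P ≤ (t * R + 2) * P :=
      Nat.mul_le_mul_right _ (by have := Nat.mul_le_mul_left t hqR; omega)
    unfold axP
    rw [← ht, ← hS, ← hR]
    omega
  · rw [dWi, ← hn1, ← hq, hx, hy]
    simp only [abs_mul, abs_neg, abs_abs]
    have : |ε| = 1 := by
      have h1 : |ε| * |ε| = 1 := by rw [← abs_mul, hε]; norm_num
      nlinarith [abs_nonneg ε]
    rw [this]
    linear_combination (-|b1 i| * s i) * hε

lemma quad_step {E : Set (Trans 2)} {b : ℕ} (hb : Bd E b) {p P : ℕ} {b1 s1 b2 s2 e : Vec 2}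
    (h1 : Cyc E p P b1 s1) (h2 : Cyc E p P b2 s2) (hc : InCone b1 b2 e) (i : Fin 2) :
    ∃ b1' s1' b2' s2', Cyc E p (max P (axP b P)) b1' s1' ∧ Cyc E p (max P (axP b P)) b2' s2' ∧
      InCone b1' b2' e ∧ 0 ≤ b1' i * b2' i ∧ ∀ j, 0 ≤ b1 j * b2 j → 0 ≤ b1' j * b2' j := by
  by_cases hi : 0 ≤ b1 i * b2 i
  · exact ⟨b1, s1, b2, s2, h1.mono (le_max_left _ _), h2.mono (le_max_left _ _), hc, hi, fun _ h => h⟩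
  · push Not at hi
    obtain ⟨h, s, c1, c2, c3, c4⟩ := axis hb h1 h2 hc.1 i hi
    have cr : ∀ j, dt b1 b2 * h j = dt h b2 * b1 j + dt b1 h * b2 j := by
      intro j
      have := congrFun (cramer b1 b2 h) j
      simpa only [Pi.add_apply, zsm] using this
    rcases le_total 0 (dt h e) with hh | hh
    · refine ⟨h, s, b2, s2, c1.mono (le_max_right _ _), h2.mono (le_max_left _ _), ⟨c4, hh, hc.2.2⟩,
        by rw [c2]; simp, ?_⟩
      intro j hj
      have : dt b1 b2 * (h j * b2 j) = dt h b2 * (b1 j * b2 j) + dt b1 h * (b2 j * b2 j) := by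
        linear_combination b2 j * cr j
      have h5 : 0 ≤ dt b1 b2 * (h j * b2 j) := by
        rw [this]; have := mul_self_nonneg (b2 j); positivity
      exact nonneg_of_mul_nonneg_right h5 hc.1
    · have hh' : 0 ≤ dt e h := by
        have : dt e h = - dt h e := by simp only [dt]; ring
        omega
      refine ⟨b1, s1, h, s, h1.mono (le_max_left _ _), c1.mono (le_max_right _ _), ⟨c3, hc.2.1, hh'⟩,
        by rw [c2]; simp, ?_⟩
      intro j hj
      have : dt b1 b2 * (b1 j * h j) = dt h b2 * (b1 j * b1 j) + dt b1 h * (b1 j * b2 j) := by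
        linear_combination b1 j * cr j
      have h5 : 0 ≤ dt b1 b2 * (b1 j * h j) := by
        rw [this]; have := mul_self_nonneg (b1 j); positivity
      exact nonneg_of_mul_nonneg_right h5 hc.1

def axQ (b P : ℕ) : ℕ := max P (axP b P)

lemma quad {E : Set (Trans 2)} {b : ℕ} (hb : Bd E b) {p P : ℕ} {b1 s1 b2 s2 e : Vec 2}
    (h1 : Cyc E p P b1 s1) (h2 : Cyc E p P b2 s2) (hc : InCone b1 b2 e) :
    ∃ b1' s1' b2' s2', Cyc E p (axQ b (axQ b P)) b1' s1' ∧ Cyc E p (axQ b (axQ b P)) b2' s2' ∧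
      InCone b1' b2' e ∧ ∀ i, 0 ≤ b1' i * b2' i := by
  obtain ⟨b1', s1', b2', s2', a1, a2, a3, a4, a5⟩ := quad_step hb h1 h2 hc 0
  obtain ⟨b1'', s1'', b2'', s2'', c1, c2, c3, c4, c5⟩ := quad_step hb a1 a2 a3 1
  refine ⟨b1'', s1'', b2'', s2'', c1, c2, c3, ?_⟩
  rw [Fin.forall_fin_two]
  exact ⟨c5 0 a4, c4⟩



def evh (i : Fin 2) : Vec 2 →+ ℤ := Pi.evalAddMonoidHom (fun _ => ℤ) i

lemma evh_apply (i : Fin 2) (w : Vec 2) : evh i w = w i := rfl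

lemma pfxA {E : Set (Trans 2)} {Q : Finset ℕ} {b : ℕ} (hb : Bd E b)
    (hQ : ∀ t ∈ E, t.1 ∈ Q ∧ t.2.2 ∈ Q) (hQc : Q.card = b) {i j : Fin 2} (hij : ∀ k, k = i ∨ k = j)
    {D2 : ℕ} {p q : ℕ} {u v : Vec 2} {π : List (Trans 2)} (hp : p ∈ Q) (h : NR E p u π q v)
    (hu : ((D2 + (b * D2 + 1) * b : ℕ) : ℤ) ≤ u j)
    (hn : ¬ KRun E (AddMonoidHom.id _) (fun _ w => (∀ k, 0 ≤ w k) ∧ w i < D2) p u π q v) :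
    ∃ s w σ x, NR E p u σ s w ∧ σ.length ≤ b * D2 + 1 ∧ (∀ k, (D2 : ℤ) ≤ w k) ∧ PR E s x q ∧
      s ∈ Q := by
  classical
  rcases krun_firstsplit (fun _ w => (D2 : ℤ) ≤ w i) h with h1 | ⟨s, w, π1, π2, rfl, hG, h1, h2⟩
  · exact absurd (krun_mono (fun _ h => h) (fun s g hg => ⟨hg.1, not_le.1 hg.2⟩) h1) hn
  have h3 := krun_Q hQ hp h1
  have h4 : KRun E (evh i) (fun s' g => (0 ≤ g ∧ s' ∈ Q) ∧ (g < D2 ∨ (s' = s ∧ g = w i)))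
      p (evh i u) π1 s (evh i w) :=
    krun_map (ω' := evh i) (evh i) (fun _ _ => by simp) (fun s' g hg => by
      obtain ⟨⟨a1, a2⟩, a3⟩ := hg
      refine ⟨⟨a1 i, a3⟩, ?_⟩
      rcases a2 with a2 | ⟨rfl, rfl⟩
      · left; exact not_le.1 a2
      · right; exact ⟨rfl, rfl⟩) (fun _ _ h => h) h3
  obtain ⟨σ, cs, g1, g2, _, _⟩ := krun_decomp' ((Q ×ˢ Finset.Ico (0 : ℤ) D2) ∪ {(s, w i)}) (by
    rintro s' g ⟨⟨a1, a2⟩, a3⟩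
    rw [Finset.mem_union]
    rcases a3 with a3 | ⟨rfl, rfl⟩
    · left; simp [a1, a2, a3]
    · right; simp) h4
  have hcard : ((Q ×ˢ Finset.Ico (0 : ℤ) D2) ∪ {(s, w i)}).card ≤ b * D2 + 1 := by
    refine (Finset.card_union_le _ _).trans ?_
    simp [hQc]
  have hl := g2.trans hcard
  have hlb : (σ.length * b : ℤ) ≤ (((b * D2 + 1) * b : ℕ) : ℤ) := by
    exact_mod_cast Nat.mul_le_mul_right b hl
  have hN : NR E p u σ s (u + disp σ) := nr_plain (A := fun k => k = j) hb (by
    rintro s' w' ⟨⟨a1, _⟩, _⟩ k hk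
    rcases hij k with rfl | hk'
    · exact a1
    · exact absurd hk' hk) g1 (by
    rintro k rfl
    push_cast at hu hlb ⊢
    have : (0 : ℤ) ≤ D2 := by positivity
    linarith)
  obtain ⟨y, hy⟩ : ∃ y, PR E s y q := ⟨π2, pr_of_krun h2⟩
  refine ⟨s, u + disp σ, σ, y, hN, hl, ?_, hy, (krun_last h3).2⟩
  intro k
  rcases hij k with rfl | rfl
  · have := krun_end g1
    simp only [evh_apply] at this
    rw [Pi.add_apply, ← this]; exact hG
  · have := (abs_le.1 (disp_bd hb (krun_mem g1) k)).1
    rw [Pi.add_apply]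
    push_cast at hu hlb ⊢
    linarith

def pfD2 (b D : ℕ) : ℕ := D + b * b
def pfD1 (b D : ℕ) : ℕ := pfD2 b D + (b * pfD2 b D + 1) * b
def pfL (b D : ℕ) : ℕ := (b * (pfD1 b D * pfD1 b D) + 1) + (b * pfD2 b D + 1) + b

lemma pfx {E : Set (Trans 2)} {Q : Finset ℕ} {b : ℕ} (hb : Bd E b)
    (hQ : ∀ t ∈ E, t.1 ∈ Q ∧ t.2.2 ∈ Q) (hQc : Q.card = b)
    {D : ℕ} {p q : ℕ} {u v : Vec 2} {π : List (Trans 2)} (hp : p ∈ Q) (h : NR E p u π q v)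
    (hn : ∀ i, ¬ KRun E (AddMonoidHom.id _) (fun _ w => (∀ k, 0 ≤ w k) ∧ w i < pfD1 b D) p u π q v) :
    ∃ w σ, NR E p u σ q w ∧ σ.length ≤ pfL b D ∧ (∀ k, (D : ℤ) ≤ w k) := by
  classical
  have main : ∃ s w σ x, NR E p u σ s w ∧
      σ.length ≤ (b * (pfD1 b D * pfD1 b D) + 1) + (b * pfD2 b D + 1) ∧
      (∀ k, (pfD2 b D : ℤ) ≤ w k) ∧ PR E s x q ∧ s ∈ Q := by
    rcases krun_firstsplit (fun _ w => ∃ j, (pfD1 b D : ℤ) ≤ w j) h with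
      h1 | ⟨s, w, π1, π2, rfl, ⟨j, hj⟩, h1, h2⟩
    · refine absurd (krun_mono (fun _ h => h) (fun s g hg => ⟨hg.1, ?_⟩) h1) (hn 0)
      have := hg.2
      push Not at this
      exact this 0
    have h3 := krun_Q hQ hp h1
    obtain ⟨σ, cs, g1, g2, _, _⟩ := krun_decomp'
      ((Q ×ˢ Fintype.piFinset (fun _ : Fin 2 => Finset.Ico (0 : ℤ) (pfD1 b D))) ∪ {(s, w)}) (by
      rintro s' g ⟨⟨a1, a2⟩, a3⟩
      rw [Finset.mem_union]
      rcases a2 with a2 | ⟨rfl, rfl⟩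
      · push Not at a2
        left
        simp only [Finset.mem_product, Fintype.mem_piFinset, Finset.mem_Ico]
        exact ⟨a3, fun k => ⟨a1 k, a2 k⟩⟩
      · right; simp) h3
    have hcard : ((Q ×ˢ Fintype.piFinset (fun _ : Fin 2 => Finset.Ico (0 : ℤ) (pfD1 b D))) ∪
        {(s, w)}).card ≤ b * (pfD1 b D * pfD1 b D) + 1 := by
      refine (Finset.card_union_le _ _).trans ?_
      simp [hQc, Fintype.card_piFinset, pow_two]
    have hl := g2.trans hcard
    have g3 : NR E p u σ s w := krun_mono (fun _ h => h) (fun s g hg => hg.1.1) g1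
    obtain ⟨i, hij⟩ : ∃ i : Fin 2, ∀ k, k = i ∨ k = j := by
      fin_cases j
      · exact ⟨1, by decide⟩
      · exact ⟨0, by decide⟩
    obtain ⟨s', w', σ', x, k1, k2, k3, k4, k5⟩ := pfxA hb hQ hQc hij (D2 := pfD2 b D)
      (krun_last h3).2 h2 hj (by
        intro hc
        refine hn i (krun_trans (krun_mono (fun _ h => h) (fun s' g hg => ⟨hg.1, ?_⟩) h1)
          (krun_mono (fun _ h => h) (fun s' g hg => ⟨hg.1, ?_⟩) hc))
        · rcases hg.2 with hg | ⟨_, rfl⟩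
          · push Not at hg; exact hg i
          · have := (krun_head hc).2
            refine this.trans_le ?_
            rw [pfD1]; push_cast; have : (0 : ℤ) ≤ (b * pfD2 b D + 1) * b := by positivity
            linarith
        · refine hg.2.trans_le ?_
          rw [pfD1]; push_cast; have : (0 : ℤ) ≤ (b * pfD2 b D + 1) * b := by positivity
          linarith)
    exact ⟨s', w', σ ++ σ', x, krun_trans g3 k1, by rw [List.length_append]; omega, k3, k4, k5⟩
  obtain ⟨s, w, σ, x, h1, h2, h3, h4, h5⟩ := main
  obtain ⟨y, hy, ly⟩ := pr_short hQ hQc h5 h4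
  have hyb : (y.length * b : ℤ) ≤ ((b * b : ℕ) : ℤ) := by exact_mod_cast Nat.mul_le_mul_right b ly
  have h6 : NR E s w y q (w + disp y) := nr_plain (A := fun _ => True) hb (f := (0 : Vec 2 →+ ℤ))
    (P := fun _ g => g = 0) (by simp) (g' := 0) hy (fun k _ => by
      have := h3 k
      rw [pfD2] at this; push_cast at this hyb
      have : (0 : ℤ) ≤ D := by positivity
      linarith)
  refine ⟨w + disp y, σ ++ y, krun_trans h1 h6, ?_, ?_⟩
  · rw [List.length_append, pfL]; omega
  · intro k
    have := h3 k
    rw [pfD2] at this; push_cast at this hyb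
    have := (abs_le.1 (disp_bd hb (krun_mem hy) k)).1
    rw [Pi.add_apply]; linarith

/-- reversal -/
def rv (t : Trans 2) : Trans 2 := (t.2.2, -t.2.1, t.1)
def Er (E : Set (Trans 2)) : Set (Trans 2) := {t | rv t ∈ E}

lemma rv_rv (t : Trans 2) : rv (rv t) = t := by simp [rv]
lemma Er_Er (E : Set (Trans 2)) : Er (Er E) = E := by ext t; simp [Er, rv_rv]

lemma krun_rev {E : Set (Trans 2)} {P : ℕ → Vec 2 → Prop} {π : List (Trans 2)} : ∀ {p u q v},
    KRun E (AddMonoidHom.id _) P p u π q v →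
    KRun (Er E) (AddMonoidHom.id _) P q v (π.map rv).reverse p u := by
  induction π with
  | nil => rintro p u q v ⟨h, rfl, rfl⟩; exact ⟨h, rfl, rfl⟩
  | cons t π ih =>
    rintro p u q v ⟨h, h0, rfl, h2⟩
    rw [List.map_cons, List.reverse_cons]
    have e : u + t.2.1 + -t.2.1 = u := by abel
    refine krun_trans (ih h2) ⟨krun_head h2, ?_, rfl, ?_, rfl, e⟩
    · show rv (rv t) ∈ E
      rw [rv_rv]; exact h0
    · show P t.1 (u + t.2.1 + -t.2.1)
      rw [e]; exact h

lemma krun_unrev {E : Set (Trans 2)} {P : ℕ → Vec 2 → Prop} {π : List (Trans 2)} {p u q v}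
    (h : KRun (Er E) (AddMonoidHom.id _) P q v π p u) :
    KRun E (AddMonoidHom.id _) P p u (π.map rv).reverse q v := by
  have := krun_rev h
  rwa [Er_Er] at this

lemma sfx {E : Set (Trans 2)} {Q : Finset ℕ} {b : ℕ} (hb : Bd E b)
    (hQ : ∀ t ∈ E, t.1 ∈ Q ∧ t.2.2 ∈ Q) (hQc : Q.card = b)
    {D : ℕ} {p q : ℕ} {u v : Vec 2} {π : List (Trans 2)} (hq : q ∈ Q) (h : NR E p u π q v)
    (hn : ∀ i, ¬ KRun E (AddMonoidHom.id _) (fun _ w => (∀ k, 0 ≤ w k) ∧ w i < pfD1 b D) p u π q v) :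
    ∃ w σ, NR E p w σ q v ∧ σ.length ≤ pfL b D ∧ (∀ k, (D : ℤ) ≤ w k) := by
  obtain ⟨w, σ, h1, h2, h3⟩ := pfx (E := Er E) (Q := Q) (b := b) (D := D)
    (fun t ht i => by have := hb _ ht i; simpa [rv] using this)
    (fun t ht => (hQ _ ht).symm) hQc hq (krun_rev h) (fun i hc => hn i (by
      have := krun_unrev hc
      rw [← List.map_reverse, List.reverse_reverse, List.map_map] at this
      have e : rv ∘ rv = id := by ext1 t; exact rv_rv t
      rwa [e, List.map_id] at this))
  exact ⟨w, _, krun_unrev h1, by simpa using h2, h3⟩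



def IsC (E : Set (Trans 2)) (b : ℕ) (z : Vec 2) : Prop :=
  ∃ r c, PR E r c r ∧ c ≠ [] ∧ c.length ≤ b ∧ disp c = z

lemma IsC.bd {E : Set (Trans 2)} {b : ℕ} (hb : Bd E b) {z : Vec 2} (h : IsC E b z) (i : Fin 2) :
    |z i| ≤ ((b * b : ℕ) : ℤ) := by
  obtain ⟨r, c, h1, h2, h3, rfl⟩ := h
  exact disp_bd' hb (krun_mem h1) h3 i

def dn (b : ℕ) : ℕ := (2 * (b * b) + 1) * (2 * (b * b) + 1)

lemma exists_C {E : Set (Trans 2)} {b : ℕ} (hb : Bd E b) :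
    ∃ C : Finset (Vec 2), (∀ z, z ∈ C ↔ IsC E b z) ∧ C.card ≤ dn b := by
  classical
  refine ⟨(Fintype.piFinset (fun _ : Fin 2 =>
    Finset.Icc (-((b * b : ℕ) : ℤ)) ((b * b : ℕ) : ℤ))).filter (IsC E b), ?_, ?_⟩
  · intro z
    rw [Finset.mem_filter, Fintype.mem_piFinset]
    refine ⟨fun h => h.2, fun h => ⟨fun i => ?_, h⟩⟩
    rw [Finset.mem_Icc]
    exact abs_le.1 (h.bd hb i)
  · refine (Finset.card_filter_le _ _).trans ?_
    rw [Fintype.card_piFinset]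
    simp only [Int.card_Icc, Finset.prod_const, Finset.card_univ, Fintype.card_fin]
    rw [show (((b * b : ℕ) : ℤ) + 1 - -((b * b : ℕ) : ℤ)).toNat = 2 * (b * b) + 1 by omega, pow_two, dn]

section
variable {E : Set (Trans 2)} {Q : Finset ℕ} {b : ℕ}

lemma span_closed (hQ : ∀ t ∈ E, t.1 ∈ Q ∧ t.2.2 ∈ Q) (hQc : Q.card = b) {C : Finset (Vec 2)}
    (hC : ∀ z, z ∈ C ↔ IsC E b z) {p x} (hp : p ∈ Q) (h : PR E p x p) :
    disp x ∈ Submodule.span ℤ (C : Set (Vec 2)) := by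
  obtain ⟨cs, h1, h2⟩ := pr_closed hQ hQc hp h
  rw [h2]
  refine list_sum_mem ?_
  intro z hz
  obtain ⟨c, hc, rfl⟩ := List.mem_map.1 hz
  obtain ⟨a1, a2, r, a3⟩ := h1 c hc
  exact Submodule.subset_span ((hC _).2 ⟨r, c, a3, a1, a2, rfl⟩)

lemma lower (hb : Bd E b) (hQ : ∀ t ∈ E, t.1 ∈ Q ∧ t.2.2 ∈ Q) (hQc : Q.card = b) {C : Finset (Vec 2)}
    (hC : ∀ z, z ∈ C ↔ IsC E b z) {f : Vec 2} (hfM : ∀ i, |f i| ≤ ((b * b : ℕ) : ℤ))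
    (hf : ∀ c ∈ C, 0 ≤ fh f c) {p x q} (hp : p ∈ Q) (h : PR E p x q) :
    -((2 * (b * b) * (b * b) : ℕ) : ℤ) ≤ fh f (disp x) := by
  obtain ⟨σ, cs, h1, h2, h3, h4⟩ := pr_decomp hQ hQc hp h
  rw [h4, map_add, map_list_sum_disp]
  have a1 := (abs_le.1 (fh_bd hfM (fun i => disp_bd' hb (krun_mem h1) h2 i))).1
  have a2 : 0 ≤ (cs.map fun c => fh f (disp c)).sum := by
    apply List.sum_nonneg
    intro y hy
    obtain ⟨c, hc, rfl⟩ := List.mem_map.1 hy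
    obtain ⟨c1, c2, r, c3⟩ := h3 c hc
    exact hf _ ((hC _).2 ⟨r, c, c3, c1, c2, rfl⟩)
  push_cast at a1 ⊢
  linarith

def NS (E : Set (Trans 2)) (b B p : ℕ) (u : Vec 2) (π : List (Trans 2)) (q : ℕ) (v : Vec 2) : Prop :=
  ∀ f : Vec 2, f ≠ 0 → (∀ i, |f i| ≤ ((b * b : ℕ) : ℤ)) → ∀ g0 : ℤ,
    ¬ KRun E (AddMonoidHom.id _) (fun _ w => (∀ i, 0 ≤ w i) ∧ |fh f w - g0| ≤ B) p u π q v

lemma halfplane (hb : Bd E b) (hQ : ∀ t ∈ E, t.1 ∈ Q ∧ t.2.2 ∈ Q) (hQc : Q.card = b)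
    {C : Finset (Vec 2)} (hC : ∀ z, z ∈ C ↔ IsC E b z) {f : Vec 2}
    (hfM : ∀ i, |f i| ≤ ((b * b : ℕ) : ℤ)) (hf0 : f ≠ 0)
    (hf : ∀ c ∈ C, 0 ≤ fh f c) {B p u π q v} (hp : p ∈ Q) (h : NR E p u π q v)
    (hns : NS E b B p u π q v) (hB : 2 * (b * b) * (b * b) ≤ B) :
    (B : ℤ) - ((2 * (b * b) * (b * b) : ℕ) : ℤ) ≤ fh f (disp π) := by
  rcases krun_firstsplit (fun _ w => ¬ |fh f w - fh f u| ≤ B) h with h1 | ⟨s, w, π1, π2, rfl, hG, h1, h2⟩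
  · exact absurd (krun_mono (fun _ h => h) (fun s g hg => ⟨hg.1, not_not.1 hg.2⟩) h1)
      (hns f hf0 hfM _)
  have a1 := lower hb hQ hQc hC hfM hf hp (pr_of_krun h1)
  have a2 := lower hb hQ hQc hC hfM hf (krun_last (krun_Q hQ hp h1)).2 (pr_of_krun h2)
  have e := krun_end h1
  rw [e] at hG
  simp only [AddMonoidHom.id_apply, map_add, add_sub_cancel_left] at hG
  rw [disp_append, map_add]
  have hB' : ((2 * (b * b) * (b * b) : ℕ) : ℤ) ≤ B := by exact_mod_cast hB
  rw [abs_le] at hG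
  by_contra hc
  apply hG
  constructor
  · linarith
  · linarith

lemma Cyc.span (hQ : ∀ t ∈ E, t.1 ∈ Q ∧ t.2.2 ∈ Q) (hQc : Q.card = b) {C : Finset (Vec 2)}
    (hC : ∀ z, z ∈ C ↔ IsC E b z) {p P z s} (hp : p ∈ Q) (h : Cyc E p P z s) :
    z ∈ Submodule.span ℤ (C : Set (Vec 2)) ∧ s ∈ Submodule.span ℤ (C : Set (Vec 2)) := by
  obtain ⟨x, h1, h2, _⟩ := h.pump 0
  obtain ⟨y, k1, k2, _⟩ := h.pump 1
  have a1 := span_closed hQ hQc hC hp h1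
  have a2 := span_closed hQ hQc hC hp k1
  rw [h2] at a1; rw [k2] at a2
  simp only [zero_smul, add_zero, one_smul] at a1 a2
  exact ⟨by simpa using Submodule.sub_mem _ a2 a1, a1⟩

lemma detours {p P N : ℕ} (sC : Vec 2 → Vec 2) (n : Vec 2 → ℕ) (C : Finset (Vec 2))
    (h : ∀ c ∈ C, Cyc E p P c (sC c)) (hn : ∀ c ∈ C, n c ≤ N) :
    ∃ x, PR E p x p ∧ disp x = ∑ c ∈ C, (sC c + n c • c) ∧ x.length ≤ C.card * ((N + 2) * P) := by
  classical
  induction C using Finset.induction_on with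
  | empty => exact ⟨[], pr_nil, by simp, by simp⟩
  | insert a C ha ih =>
    obtain ⟨x, h1, h2, h3⟩ := ih (fun c hc => h c (by simp [hc])) (fun c hc => hn c (by simp [hc]))
    obtain ⟨y, k1, k2, k3⟩ := (h a (by simp)).pump (n a)
    refine ⟨y ++ x, pr_trans k1 h1, ?_, ?_⟩
    · rw [disp_append, Finset.sum_insert ha, h2, k2]
    · rw [List.length_append, Finset.card_insert_of_notMem ha, add_mul, one_mul]
      have : (n a + 2) * P ≤ (N + 2) * P := Nat.mul_le_mul_right _ (by have := hn a (by simp); omega)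
      omega

lemma sum_bd (C : Finset (Vec 2)) (F : Vec 2 → Vec 2) {K : ℤ} (h : ∀ c ∈ C, ∀ i, |F c i| ≤ K)
    (i : Fin 2) : |(∑ c ∈ C, F c) i| ≤ C.card * K := by
  rw [Finset.sum_apply]
  refine (Finset.abs_sum_le_sum_abs _ _).trans ?_
  refine (Finset.sum_le_card_nsmul _ _ K (fun c hc => h c hc i)).trans ?_
  simp

end

def dP (b : ℕ) : ℕ := axQ b (axQ b b)
def dW (b : ℕ) : ℕ := 6 * (dP b * b)
def dJ (b : ℕ) : ℕ := latJ (b * b) (dW b) (dn b)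
def dL (b : ℕ) : ℕ := dn b * ((2 * dJ b + 2) * b) + 2 * dP b
def dD (b : ℕ) : ℕ := 6 * (dL b * b)
def dA (b : ℕ) : ℕ := pfL b (dD b)
def dE (b : ℕ) : ℕ := 2 * (dA b * b) + dn b * (2 * (b * b)) + dJ b * (dn b * (b * b))
def dB (b : ℕ) : ℕ := pfD1 b (dD b) + 2 * (b * b) * (b * b) + 2 * (b * b) * dE b + 1


section
variable {E : Set (Trans 2)} {Q : Finset ℕ} {b : ℕ}

lemma latJ_mono (R W : ℕ) {n m : ℕ} (h : n ≤ m) : latJ R W n ≤ latJ R W m := by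
  unfold latJ; gcongr

lemma deep_mid (hb : Bd E b) (hQ : ∀ t ∈ E, t.1 ∈ Q ∧ t.2.2 ∈ Q) (hQc : Q.card = b)
    {C : Finset (Vec 2)} (hC : ∀ z, z ∈ C ↔ IsC E b z) (hCc : C.card ≤ dn b) {p : ℕ} (hp : p ∈ Q)
    {sC : Vec 2 → Vec 2} (hsC : ∀ c ∈ C, Cyc E p b c (sC c))
    (hind : ∃ c1 ∈ C, ∃ c2 ∈ C, dt c1 c2 ≠ 0) {w w' : Vec 2}
    (hw : ∀ k, (dD b : ℤ) ≤ w k) (hw' : ∀ k, (dD b : ℤ) ≤ w' k)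
    (hX : w' - w ∈ Submodule.span ℤ (C : Set (Vec 2)))
    (hF : ∀ c ∈ C, c ≠ 0 → ∀ ε : ℤ, ε * ε = 1 → (∀ c' ∈ C, 0 ≤ ε * dt c c') →
      0 ≤ ε * dt c (w' - w - ∑ c ∈ C, sC c - (dJ b : ℤ) • ∑ c ∈ C, c)) :
    CL E 2 (5 * dL b) p w p w' := by
  classical
  obtain ⟨c1, hc1, c2, hc2, hcone⟩ := farkas C _ hind hF
  obtain ⟨b1, s1, b2, s2, k1, k2, hcone', hq⟩ := quad hb (hsC c1 hc1) (hsC c2 hc2) hcone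
  change Cyc E p (dP b) b1 s1 at k1
  change Cyc E p (dP b) b2 s2 at k2
  obtain ⟨l1, l2, hl⟩ := cone_floor hcone' (k1.zbd hb) (k2.zbd hb)
  set e' := w' - w - ∑ c ∈ C, sC c - (dJ b : ℤ) • ∑ c ∈ C, c with he'
  set ρ := e' - (l1 • b1 + l2 • b2) - s1 - s2 with hρ
  obtain ⟨m1, m1'⟩ := k1.span hQ hQc hC hp
  obtain ⟨m2, m2'⟩ := k2.span hQ hQc hC hp
  have hρs : ρ ∈ Submodule.span ℤ (C : Set (Vec 2)) := by
    refine Submodule.sub_mem _ (Submodule.sub_mem _ (Submodule.sub_mem _ (Submodule.sub_mem _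
      (Submodule.sub_mem _ hX ?_) ?_) ?_) m1') m2'
    · exact Submodule.sum_mem _ (fun c hc => ((hsC c hc).span hQ hQc hC hp).2)
    · exact Submodule.smul_mem _ _ (Submodule.sum_mem _ (fun c hc => Submodule.subset_span hc))
    · exact Submodule.add_mem _ (nsmul_mem m1 _) (nsmul_mem m2 _)
  obtain ⟨y, _, hy⟩ := Submodule.mem_span_finset.1 hρs
  have hWb : ∀ i, |ρ i| ≤ (dW b : ℤ) := by
    intro i
    have a1 := abs_le.1 (hl i)
    have a2 := abs_le.1 (k1.sbd hb i)
    have a3 := abs_le.1 (k2.sbd hb i)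
    have : ρ i = (e' - (l1 • b1 + l2 • b2)) i - s1 i - s2 i := rfl
    rw [this, dW, abs_le]
    push_cast at *
    constructor <;> linarith
  obtain ⟨y', hy', hyb⟩ := lat C (fun c hc => ((hC c).1 hc).bd hb) hind ρ y hy.symm hWb
  have hyJ : ∀ c ∈ C, |y' c| ≤ (dJ b : ℤ) := fun c hc =>
    (hyb c hc).trans (by exact_mod_cast latJ_mono _ _ hCc)
  set n : Vec 2 → ℕ := fun c => ((dJ b : ℤ) + y' c).toNat with hn
  have hnc : ∀ c ∈ C, (n c : ℤ) = dJ b + y' c := by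
    intro c hc
    have := abs_le.1 (hyJ c hc)
    exact Int.toNat_of_nonneg (by linarith)
  obtain ⟨M, M1, M2, M3⟩ := detours (E := E) (p := p) (P := b) (N := 2 * dJ b) sC n C hsC (by
    intro c hc
    have := abs_le.1 (hyJ c hc)
    have := hnc c hc
    omega)
  have hM : disp M = ∑ c ∈ C, sC c + (dJ b : ℤ) • ∑ c ∈ C, c + ρ := by
    rw [M2, hy', Finset.smul_sum, ← Finset.sum_add_distrib, ← Finset.sum_add_distrib]
    refine Finset.sum_congr rfl (fun c hc => ?_)
    rw [add_assoc, ← add_smul, ← hnc c hc, natCast_zsmul]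
  have hMl : M.length ≤ dn b * ((2 * dJ b + 2) * b) := M3.trans (Nat.mul_le_mul_right _ hCc)
  have hz : ∀ i, (0 ≤ b1 i ∧ 0 ≤ b2 i) ∨ (b1 i ≤ 0 ∧ b2 i ≤ 0) := by
    intro i
    have := hq i
    exact mul_nonneg_iff.1 this
  obtain ⟨r1, x1, β1, o1, p1, p2, p3, n1, q1, q2, q3, rfl, rfl⟩ := k1
  obtain ⟨r2, x2, β2, o2, p1', p2', p3', n2, q1', q2', q3', rfl, rfl⟩ := k2
  refine assemble (A := fun _ => True) (f := (0 : Vec 2 →+ ℤ)) (P := fun _ g => g = 0) (Y := 0)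
    (D := dD b) hb (by simp) (L := dL b) (pr_trans M1 p1) p2 (pr_trans p3 p1') p2' p3' n1 n2
    ?_ ?_ ?_ ?_ ?_ l1 l2 ?_ le_rfl ?_ (fun i _ => hw i) (fun i _ => hw' i) ?_
  · rw [List.length_append, dL]; omega
  · rw [dL]; omega
  · rw [List.length_append, dL]; omega
  · rw [dL]; omega
  · rw [dL]; omega
  · rw [disp_append, disp_append, hM, hρ, he']; abel
  · rw [dD]; push_cast; linarith
  · intro i _
    rcases hz i with ⟨z1, z2⟩ | ⟨z1, z2⟩
    · left; constructor
      · simpa using mul_nonneg (Int.natCast_nonneg l1) z1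
      · simpa using mul_nonneg (Int.natCast_nonneg l2) z2
    · right; exact ⟨mul_nonpos_of_nonneg_of_nonpos (Int.natCast_nonneg l1) z1,
        mul_nonpos_of_nonneg_of_nonpos (Int.natCast_nonneg l2) z2⟩

lemma dt_fh (c x : Vec 2) (ε : ℤ) : fh ![-(ε * c 1), ε * c 0] x = ε * dt c x := by
  simp only [fh_apply, dt, Matrix.cons_val_zero, Matrix.cons_val_one]; ring

lemma eps_abs {ε : ℤ} (hε : ε * ε = 1) : |ε| = 1 := by
  have h1 : |ε| * |ε| = 1 := by rw [← abs_mul, hε]; norm_num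
  nlinarith [abs_nonneg ε]

lemma deep (hb1 : 1 ≤ b) (hb : Bd E b) (hQ : ∀ t ∈ E, t.1 ∈ Q ∧ t.2.2 ∈ Q) (hQc : Q.card = b)
    {p : ℕ} (hp : p ∈ Q) (hsc : SC E p) {u v : Vec 2} {π : List (Trans 2)} (h : NR E p u π p v)
    (hns : NS E b (dB b) p u π p v) : CL E 2 (2 * dA b + 5 * dL b) p u p v := by
  classical
  obtain ⟨C, hC, hCc⟩ := exists_C hb
  have hcy : ∀ c, ∃ s, c ∈ C → Cyc E p b c s := by
    intro c
    by_cases hc : c ∈ C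
    · obtain ⟨r, x, h1, h2, h3, rfl⟩ := (hC c).1 hc
      obtain ⟨s, hs⟩ := cyc_of_closed hQ hQc hp hsc h1 h2 h3
      exact ⟨s, fun _ => hs⟩
    · exact ⟨0, fun h => absurd h hc⟩
  choose sC hsC using hcy
  have b1 : 1 ≤ b * b := Nat.mul_le_mul hb1 hb1
  -- axes
  have hax : ∀ i, ¬ KRun E (AddMonoidHom.id _)
      (fun _ w => (∀ k, 0 ≤ w k) ∧ w i < pfD1 b (dD b)) p u π p v := by
    intro i hc
    refine hns (Pi.single i 1) (by simp) ?_ 0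
      (krun_mono (fun _ h => h) (fun s g hg => ⟨hg.1, ?_⟩) hc)
    · intro j
      by_cases hj : j = i
      · subst hj; simp; exact_mod_cast b1
      · simp [Pi.single_eq_of_ne hj]; positivity
    · have e : fh (Pi.single i 1) g = g i := by
        rw [fh_apply]; fin_cases i <;> simp
      rw [e, sub_zero, abs_of_nonneg (hg.1 i)]
      refine hg.2.le.trans ?_
      rw [dB]; push_cast
      have : (0 : ℤ) ≤ 2 * (b * b) * (b * b) + 2 * (b * b) * dE b := by positivity
      linarith
  obtain ⟨w, α, a1, a2, a3⟩ := pfx hb hQ hQc hp h hax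
  obtain ⟨w', α', a1', a2', a3'⟩ := sfx hb hQ hQc hp h hax
  have hBH : 2 * (b * b) * (b * b) ≤ dB b := by rw [dB]; omega
  have hBHE : (2 * (b * b) * (dE b) : ℤ) + 1 ≤ dB b - ((2 * (b * b) * (b * b) : ℕ) : ℤ) := by
    rw [dB]; push_cast
    have : (0 : ℤ) ≤ pfD1 b (dD b) := by positivity
    linarith
  have hEn : (0 : ℤ) ≤ 2 * (b * b) * (dE b) := by positivity
  have hX : w' - w = disp π - disp α - disp α' := by
    have e1 := krun_end a1
    have e2 := krun_end a1'
    have e3 := krun_end h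
    simp only [AddMonoidHom.id_apply] at e1 e2 e3
    have : w' = v - disp α' := by rw [e2]; abel
    rw [this, e1, e3]; abel
  have noind : ∀ f : Vec 2, f ≠ 0 → (∀ i, |f i| ≤ ((b * b : ℕ) : ℤ)) → ¬ ∀ c ∈ C, fh f c = 0 := by
    intro f hf hfM hc
    have h1 := halfplane hb hQ hQc hC hfM hf (fun c hcC => (hc c hcC).ge) hp h hns hBH
    have hneg : ∀ x, fh (-f) x = - fh f x := by
      intro x; simp only [fh_apply, Pi.neg_apply]; ring
    have h2 := halfplane hb hQ hQc hC (f := -f) (by simpa using hfM) (neg_ne_zero.2 hf)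
      (fun c hcC => by rw [hneg, hc c hcC]; simp) hp h hns hBH
    rw [hneg] at h2
    linarith
  have vec_ne : ∀ (c : Vec 2) (ε : ℤ), ε * ε = 1 → c ≠ 0 → (![-(ε * c 1), ε * c 0] : Vec 2) ≠ 0 := by
    intro c ε hε hc h0
    have e0 := congrFun h0 0
    have e1 := congrFun h0 1
    simp only [Matrix.cons_val_zero, Matrix.cons_val_one, Pi.zero_apply] at e0 e1
    apply hc
    apply vec_ext
    · simp only [Pi.zero_apply]; linear_combination ε * e1 - c 0 * hε
    · simp only [Pi.zero_apply]; linear_combination -ε * e0 - c 1 * hε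
  have vec_bd : ∀ (c : Vec 2) (ε : ℤ), ε * ε = 1 → c ∈ C →
      ∀ i, |(![-(ε * c 1), ε * c 0] : Vec 2) i| ≤ ((b * b : ℕ) : ℤ) := by
    intro c ε hε hc
    have := ((hC c).1 hc).bd hb
    rw [Fin.forall_fin_two]
    simp only [Matrix.cons_val_zero, Matrix.cons_val_one, abs_neg, abs_mul, eps_abs hε, one_mul]
    exact ⟨this 1, this 0⟩
  have hind : ∃ c1 ∈ C, ∃ c2 ∈ C, dt c1 c2 ≠ 0 := by
    by_contra hcon
    push Not at hcon
    by_cases hz : ∃ c ∈ C, c ≠ 0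
    · obtain ⟨c, hc, hc0⟩ := hz
      refine noind _ (vec_ne c 1 (by norm_num) hc0) (vec_bd c 1 (by norm_num) hc) ?_
      intro c' hc'
      rw [dt_fh, hcon c hc c' hc', mul_zero]
    · push Not at hz
      refine noind (Pi.single 0 1) (by simp) ?_ ?_
      · rw [Fin.forall_fin_two]; constructor
        · simp; exact_mod_cast b1
        · simp; positivity
      · intro c hc; rw [hz c hc, map_zero]
  have mid := deep_mid hb hQ hQc hC hCc hp hsC hind a3 a3' (by
      rw [hX]
      exact Submodule.sub_mem _ (Submodule.sub_mem _ (span_closed hQ hQc hC hp (pr_of_krun h))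
        (span_closed hQ hQc hC hp (pr_of_krun a1))) (span_closed hQ hQc hC hp (pr_of_krun a1'))) (by
      intro c hc hc0 ε hε hpos
      have h1 := halfplane hb hQ hQc hC (vec_bd c ε hε hc) (vec_ne c ε hε hc0)
        (fun c' hc' => by rw [dt_fh]; exact hpos c' hc') hp h hns hBH
      have e : w' - w - ∑ c ∈ C, sC c - (dJ b : ℤ) • ∑ c ∈ C, c =
          disp π - (disp α + disp α' + ∑ c ∈ C, sC c + (dJ b : ℤ) • ∑ c ∈ C, c) := by
        rw [hX]; abel
      rw [e, ← dt_fh, map_sub]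
      have h2 := (abs_le.1 (fh_bd (z := disp α + disp α' + ∑ c ∈ C, sC c + (dJ b : ℤ) • ∑ c ∈ C, c)
        (b := (dE b : ℤ)) (vec_bd c ε hε hc) (by
          intro i
          have n1 := abs_le.1 (disp_bd' hb (krun_mem a1) a2 i)
          have n2 := abs_le.1 (disp_bd' hb (krun_mem a1') a2' i)
          have n3 := sum_bd C sC (fun c hc => (hsC c hc).sbd hb) i
          have n4 := sum_bd C (fun c => c) (fun c hc => ((hC c).1 hc).bd hb) i
          have cc : (C.card : ℤ) ≤ dn b := by exact_mod_cast hCc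
          have n3' := abs_le.1 (n3.trans (mul_le_mul_of_nonneg_right cc (by positivity)))
          have n4' := n4.trans (mul_le_mul_of_nonneg_right cc (by positivity))
          have n5 : |(dJ b : ℤ) * (∑ c ∈ C, c) i| ≤ dJ b * (dn b * ((b * b : ℕ) : ℤ)) := by
            rw [abs_mul, abs_of_nonneg (Int.natCast_nonneg (dJ b))]
            exact mul_le_mul_of_nonneg_left n4' (Int.natCast_nonneg _)
          have n5' := abs_le.1 n5
          simp only [Pi.add_apply, zsm]
          rw [dE, abs_le]
          change ((-((dA b * b : ℕ) : ℤ)) ≤ _ ∧ _ ≤ ((dA b * b : ℕ) : ℤ)) at n1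
          change ((-((dA b * b : ℕ) : ℤ)) ≤ _ ∧ _ ≤ ((dA b * b : ℕ) : ℤ)) at n2
          push_cast at n1 n2 n3' n5' ⊢
          constructor <;> linarith))).2
      push_cast at h2 h1 hBHE
      linarith)
  have r1 := CL.of_run a1 a2
  have r2 := CL.of_run a1' a2'
  exact ((r1.trans mid).trans r2).le (by omega) (by
    change dA b + 5 * dL b + dA b ≤ _
    omega)

end


def dC (b : ℕ) : ℕ := SL b (b * b) (dB b) + (2 * dA b + 5 * dL b)

lemma core {E : Set (Trans 2)} {Q : Finset ℕ} {b : ℕ} (hb1 : 1 ≤ b) (hb : Bd E b)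
    (hQ : ∀ t ∈ E, t.1 ∈ Q ∧ t.2.2 ∈ Q) (hQc : Q.card = b)
    {p : ℕ} (hp : p ∈ Q) {u v : Vec 2} {π : List (Trans 2)} (h : NR E p u π p v) :
    CL E 2 (dC b) p u p v := by
  set E' : Set (Trans 2) := {t | t ∈ π} with hE'
  have hsub : ∀ t ∈ E', t ∈ E := krun_mem h
  have h' : NR E' p u π p v := krun_map (fun g => g) (fun _ _ => rfl) (fun _ _ h => h)
    (fun t ht _ => ht) h
  have hsc : SC E' p := by
    intro t ht
    obtain ⟨x, y, rfl⟩ := List.append_of_mem (show t ∈ π from ht)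
    obtain ⟨r, k, h1, h2⟩ := krun_append.1 h'
    have : t.1 = r := h2.2.2.1
    subst this
    exact ⟨⟨_, pr_of_krun h1⟩, ⟨_, pr_of_krun h2⟩⟩
  have hb' : Bd E' b := fun t ht => hb t (hsub t ht)
  have hQ' : ∀ t ∈ E', t.1 ∈ Q ∧ t.2.2 ∈ Q := fun t ht => hQ t (hsub t ht)
  apply CL.mono hsub
  by_cases hns : NS E' b (dB b) p u π p v
  · exact (deep hb1 hb' hQ' hQc hp hsc h' hns).le le_rfl (by rw [dC]; omega)
  · unfold NS at hns
    push Not at hns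
    obtain ⟨f, hf, hM, g0, hk⟩ := hns
    exact (strip hb' hQ' hQc hf hM hp hk).le le_rfl (by rw [dC]; omega)

lemma chain {E : Set (Trans 2)} {Q : Finset ℕ} {b : ℕ} (hb1 : 1 ≤ b) (hb : Bd E b)
    (hQ : ∀ t ∈ E, t.1 ∈ Q ∧ t.2.2 ∈ Q) (hQc : Q.card = b) (n : ℕ) :
    ∀ (W : Finset ℕ), W ⊆ Q → W.card = n → ∀ {p u π q v},
    KRun E (AddMonoidHom.id _) (fun s w => (∀ i, 0 ≤ w i) ∧ s ∈ W) p u π q v →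
    CL E (2 * n) (n * (dC b + 1)) p u q v := by
  induction n with
  | zero =>
    intro W _ hW p u π q v h
    rw [Finset.card_eq_zero] at hW
    subst hW
    have := (krun_head h).2
    simp at this
  | succ n ih =>
    intro W hWQ hW p u π q v h
    have hpW := (krun_head h).2
    have e1 : (n + 1) * (dC b + 1) = n * (dC b + 1) + (dC b + 1) := by ring
    rcases krun_lastsplit (fun s _ => s = p) h with h1 | ⟨s, w, π1, rfl, h1, h2⟩
    · exact absurd rfl (krun_head h1).2
    have c1 := core hb1 hb hQ hQc (hWQ hpW) (krun_mono (fun _ h => h) (fun s g hg => hg.1) h1)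
    rcases h2 with ⟨rfl, rfl⟩ | ⟨t, π2, ht, ht1, h3, _⟩
    · exact c1.le (by omega) (by rw [e1]; omega)
    · have hh := krun_head h3
      have c2 : CL E 0 1 s w t.2.2 (w + t.2.1) :=
        CL.of_run (π := [t]) ⟨(krun_last h1).1, ht, ht1, hh.1.1, rfl, rfl⟩ (by simp)
      have c3 := ih (W.erase s) ((Finset.erase_subset _ _).trans hWQ)
        (by rw [Finset.card_erase_of_mem hpW]; omega)
        (krun_mono (fun _ h => h) (fun s' g hg => ⟨hg.1.1, Finset.mem_erase.2 ⟨hg.2, hg.1.2⟩⟩) h3)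
      exact ((c1.trans c2).trans c3).le (by omega) (by rw [e1]; omega)

def PB (g : ℕ → ℕ) : Prop := ∃ c, ∀ b, 2 ≤ b → g b ≤ b ^ c

lemma PB.const (k : ℕ) : PB (fun _ => k) :=
  ⟨k, fun b hb => (Nat.lt_pow_self (by omega : 1 < b)).le⟩
lemma PB.id : PB (fun b => b) := ⟨1, fun b _ => by simp⟩
lemma PB.add {f g : ℕ → ℕ} (hf : PB f) (hg : PB g) : PB (fun b => f b + g b) := by
  obtain ⟨c, hc⟩ := hf
  obtain ⟨d, hd⟩ := hg
  refine ⟨max c d + 1, fun b hb => ?_⟩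
  have h1 : b ^ c ≤ b ^ max c d := Nat.pow_le_pow_right (by omega) (le_max_left _ _)
  have h2 : b ^ d ≤ b ^ max c d := Nat.pow_le_pow_right (by omega) (le_max_right _ _)
  have h3 : b ^ max c d * 2 ≤ b ^ max c d * b := Nat.mul_le_mul_left _ hb
  have := hc b hb
  have := hd b hb
  rw [pow_succ]; show f b + g b ≤ _
  omega
lemma PB.mul {f g : ℕ → ℕ} (hf : PB f) (hg : PB g) : PB (fun b => f b * g b) := by
  obtain ⟨c, hc⟩ := hf
  obtain ⟨d, hd⟩ := hg
  refine ⟨c + d, fun b hb => ?_⟩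
  rw [pow_add]; exact Nat.mul_le_mul (hc b hb) (hd b hb)
lemma PB.max {f g : ℕ → ℕ} (hf : PB f) (hg : PB g) : PB (fun b => max (f b) (g b)) := by
  obtain ⟨c, hc⟩ := hf.add hg
  exact ⟨c, fun b hb => (max_le (Nat.le_add_right _ _) (Nat.le_add_left _ _)).trans (hc b hb)⟩

lemma pb_axS {g : ℕ → ℕ} (h : PB g) : PB (fun b => axS b (g b)) := by
  unfold axS; exact (PB.const 4).mul (h.mul .id)
lemma pb_axT {g : ℕ → ℕ} (h : PB g) : PB (fun b => axT b (g b)) := by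
  have := pb_axS h
  unfold axT
  repeat (with_reducible first | assumption | exact PB.id | exact PB.const _ | apply PB.add | apply PB.mul)
lemma pb_axQ {g : ℕ → ℕ} (h : PB g) : PB (fun b => axQ b (g b)) := by
  have := pb_axS h
  have := pb_axT h
  unfold axQ axP
  repeat (with_reducible first | assumption | exact PB.id | exact PB.const _ | apply PB.max | apply PB.add | apply PB.mul)
lemma pb_dP : PB dP := pb_axQ (pb_axQ .id)
lemma pb_dn : PB dn := by
  show PB (fun b => dn b)
  unfold dn
  repeat (with_reducible first | assumption | exact PB.id | exact PB.const _ | apply PB.add | apply PB.mul)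
lemma pb_dJ : PB dJ := by
  have h1 : PB (fun b => dP b) := pb_dP
  have h2 : PB (fun b => dn b) := pb_dn
  show PB (fun b => dJ b)
  unfold dJ latJ dW
  repeat (with_reducible first | assumption | exact PB.id | exact PB.const _ | apply PB.add | apply PB.mul)
lemma pb_dL : PB dL := by
  have h1 : PB (fun b => dP b) := pb_dP
  have h2 : PB (fun b => dn b) := pb_dn
  have h3 : PB (fun b => dJ b) := pb_dJ
  show PB (fun b => dL b)
  unfold dL
  repeat (with_reducible first | assumption | exact PB.id | exact PB.const _ | apply PB.add | apply PB.mul)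
lemma pb_pfD2 : PB (fun b => pfD2 b (dD b)) := by
  have h1 : PB (fun b => dL b) := pb_dL
  unfold pfD2 dD
  repeat (with_reducible first | assumption | exact PB.id | exact PB.const _ | apply PB.add | apply PB.mul)
lemma pb_pfD1 : PB (fun b => pfD1 b (dD b)) := by
  have h1 := pb_pfD2
  unfold pfD1
  repeat (with_reducible first | assumption | exact PB.id | exact PB.const _ | apply PB.add | apply PB.mul)
lemma pb_dA : PB (fun b => dA b) := by
  have h1 := pb_pfD2
  have h2 := pb_pfD1
  unfold dA pfL
  repeat (with_reducible first | assumption | exact PB.id | exact PB.const _ | apply PB.add | apply PB.mul)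
lemma pb_dB : PB (fun b => dB b) := by
  have h1 := pb_pfD1
  have h2 := pb_dA
  have h3 : PB (fun b => dn b) := pb_dn
  have h4 : PB (fun b => dJ b) := pb_dJ
  unfold dB dE
  repeat (with_reducible first | assumption | exact PB.id | exact PB.const _ | apply PB.add | apply PB.mul)
lemma pb_dC : PB (fun b => dC b) := by
  have h1 := pb_dA
  have h2 := pb_dB
  have h3 : PB (fun b => dL b) := pb_dL
  unfold dC SL sV sD sJ sL sN sH
  repeat (with_reducible first | assumption | exact PB.id | exact PB.const _ | apply PB.add | apply PB.mul)

lemma fin_lists {α : Type} (S : Set α) (hS : S.Finite) (n : ℕ) :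
    {l : List α | l.length ≤ n ∧ ∀ x ∈ l, x ∈ S}.Finite := by
  have : Finite S := hS
  refine ((List.finite_length_le S n).image (List.map Subtype.val)).subset ?_
  rintro l ⟨h1, h2⟩
  refine ⟨l.attach.map (fun x => ⟨x.1, h2 x.1 x.2⟩), ?_, ?_⟩
  · simpa using h1
  · rw [List.map_map]
    exact List.attach_map_subtype_val l

lemma fin_lps (T : Finset (Trans 2)) (N k : ℕ) :
    {ρ : LPS 2 | (∃ p q, IsLPSFrom T p q ρ) ∧ lpsLen ρ ≤ N ∧ numCycles ρ ≤ k}.Finite := by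
  have h1 := fin_lists (T : Set (Trans 2)) T.finite_toSet N
  have h2 := fin_lists _ (h1.prod h1) k
  refine (h1.prod h2).subset ?_
  rintro ⟨a, l⟩ ⟨⟨p, q, h3, _, _⟩, h4, h5⟩
  have sub : ∀ s ∈ l, (s.1 ++ s.2).Sublist (lpsSupport ((a, l) : LPS 2)) := by
    intro s hs
    refine List.Sublist.trans ?_ (List.sublist_append_right _ _)
    exact List.sublist_flatten_of_mem (List.mem_map.2 ⟨s, hs, rfl⟩)
  have aux : ∀ x : List (Trans 2), x.Sublist (lpsSupport ((a, l) : LPS 2)) →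
      x.length ≤ N ∧ ∀ t ∈ x, t ∈ (T : Set (Trans 2)) := fun x hx =>
    ⟨hx.length_le.trans h4, fun t ht => h3 t (hx.subset ht)⟩
  refine ⟨aux a (List.sublist_append_left _ _), h5, fun s hs => ⟨aux _ ?_, aux _ ?_⟩⟩
  · exact (List.sublist_append_left _ _).trans (sub s hs)
  · exact (List.sublist_append_right _ _).trans (sub s hs)

lemma tnorm_bd (T : Finset (Trans 2)) : ∀ t ∈ T, ∀ i, |t.2.1 i| ≤ (tnorm T : ℤ) := by
  intro t ht i
  have h1 : vnorm t.2.1 ≤ tnorm T := Finset.le_sup (f := fun t : Trans 2 => vnorm t.2.1) ht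
  have h2 : (t.2.1 i).natAbs ≤ vnorm t.2.1 :=
    Finset.le_sup (f := fun i => (t.2.1 i).natAbs) (Finset.mem_univ i)
  have : (t.2.1 i).natAbs ≤ tnorm T := h2.trans h1
  rw [Int.abs_eq_natAbs]; exact_mod_cast this

lemma reach_small (Q : Finset ℕ) (T : Finset (Trans 2)) (hT : ∀ t ∈ T, t.1 ∈ Q ∧ t.2.2 ∈ Q) {c : ℕ}
    (hc : ∀ b, 2 ≤ b → b * (dC b + 1) ≤ b ^ c) {p q u v π} (hp : p ∈ Q) (hq : q ∈ Q)
    (h : NR T p u π q v) : CL T (2 * Q.card) ((Q.card + tnorm T) ^ c) p u q v := by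
  by_cases hb : 2 ≤ Q.card + tnorm T
  · obtain ⟨Q', hsub, hcard⟩ := Infinite.exists_superset_card_eq Q (Q.card + tnorm T) (by omega)
    have hbd : Bd (T : Set (Trans 2)) (Q.card + tnorm T) := by
      intro t ht i
      have := tnorm_bd T t ht i
      push_cast; linarith
    have := chain (by omega) hbd (fun t ht => ⟨hsub (hT t ht).1, hsub (hT t ht).2⟩) hcard Q.card Q hsub
      rfl (krun_Q hT hp h)
    refine this.le le_rfl ((Nat.mul_le_mul_right _ ?_).trans (hc _ hb))
    omega
  · have hn : 0 < Q.card := Finset.card_pos.2 ⟨p, hp⟩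
    have h1 : Q.card = 1 := by omega
    have h0 : tnorm T = 0 := by omega
    obtain ⟨a, rfl⟩ := Finset.card_eq_one.1 h1
    simp only [Finset.mem_singleton] at hp hq
    subst hp hq
    have hbd : Bd (T : Set (Trans 2)) 0 := by
      intro t ht i
      have := tnorm_bd T t ht i
      rwa [h0] at this
    have hv : v = u := by
      rw [krun_end h]
      ext i
      have := disp_bd hbd (krun_mem h) i
      have : disp π i = 0 := by simpa using this
      simp [this]
    subst hv
    exact ⟨0, by omega, 0, by omega, Cmp.nil (krun_head h)⟩


/-- Proposition, part (b). Reachability of a 2-VASS via runs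
staying entirely in the region `O = [D,∞)²` is captured by small linear path
schemes (evaluated over ℕ²) with at most `2·|Q|` cycles. -/
theorem statement4 :
    ∃ c₁ c₂ : ℕ, ∀ (Q : Finset ℕ) (T : Finset (Trans 2)),
      (∀ t ∈ T, t.1 ∈ Q ∧ t.2.2 ∈ Q) →
      ∃ D : ℕ, D ≤ (Q.card + tnorm T) ^ c₁ ∧
      ∃ X : Finset (LPS 2),
        (∀ ρ ∈ X, ∃ p q, IsLPSFrom T p q ρ) ∧
        (∀ p ∈ Q, ∀ q ∈ Q, ∀ u v : Vec 2,
          (∀ i, (D : ℤ) ≤ u i) → (∀ i, (D : ℤ) ≤ v i) →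
          (Reach T {w : Vec 2 | ∀ i, (D : ℤ) ≤ w i} p u q v ↔
            SReach T X (NatSet 2) p u q v)) ∧
        (∀ ρ ∈ X, lpsLen ρ ≤ (Q.card + tnorm T) ^ c₂) ∧
        (∀ ρ ∈ X, numCycles ρ ≤ 2 * Q.card) := by
  obtain ⟨c, hc⟩ := PB.id.mul (pb_dC.add (PB.const 1))
  refine ⟨0, c, fun Q T hT => ⟨0, by simp, ?_⟩⟩
  have hfin := fin_lps T ((Q.card + tnorm T) ^ c) (2 * Q.card)
  refine ⟨hfin.toFinset, ?_, ?_, ?_, ?_⟩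
  · intro ρ hρ; exact ((Set.Finite.mem_toFinset _).1 hρ).1
  · intro p hp q hq u v hu hv
    have e : {w : Vec 2 | ∀ i, ((0 : ℕ) : ℤ) ≤ w i} = NatSet 2 := by
      ext w; simp [NatSet]
    rw [e]
    constructor
    · rintro ⟨π, hπ⟩
      obtain ⟨k, hk, L, hL, hcmp⟩ := reach_small Q T hT hc hp hq (run_iff.1 hπ)
      obtain ⟨ρ, e, h1, h2, h3, h4, h5⟩ := hcmp.to_lps
      refine ⟨ρ, ?_, lpsWord ρ e, ⟨e, h4, rfl⟩, run_iff.2 h5⟩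
      rw [Set.Finite.mem_toFinset]
      exact ⟨⟨p, q, h1⟩, by omega, by omega⟩
    · rintro ⟨ρ, _, π, _, hπ⟩
      exact ⟨π, hπ⟩
  · intro ρ hρ; exact ((Set.Finite.mem_toFinset _).1 hρ).2.1
  · intro ρ hρ; exact ((Set.Finite.mem_toFinset _).1 hρ).2.2


end VASS
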